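/- arXiv:1201.6110 — 5 statements merged into one kernel-verified Lean document; each statement's English description precedes it below -/
import Mathlib

section
/- Let n be a natural number, R = MvPolynomial (Fin n) ℂ, and f ∈ R. Write (f) = Ideal.span {f} and let J = Ideal.span ({f} ∪ { pderiv i f | i : Fin n }) be the ideal generated by f and all its partial derivatives. Then the sequence of R-modules 0 → Der(−log f) → Derivation ℂ R R → R ⧸ (f) → R ⧸ J → 0 is exact, where the first map is the submodule inclusion, the second map sends a derivation θ to the class of θ f modulo (f), and the third map is the natural quotient projection induced by (f) ≤ J. Exactness means: the inclusion is injective; the kernel of θ ↦ θ f mod (f) is exactly Der(−log f); the image of θ ↦ θ f mod (f) is exactly the kernel J/(f) of the projection R ⧸ (f) → R ⧸ J; and the projection R ⧸ (f) → R ⧸ J is surjective. -/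
open MvPolynomial

/-- Evaluation of a derivation at a fixed element `f`, as an `R`-linear map. -/
noncomputable def derEval {R : Type*} [CommRing R] [Algebra ℂ R] (f : R) :
    Derivation ℂ R R →ₗ[R] R where
  toFun θ := θ f
  map_add' _ _ := Derivation.add_apply f
  map_smul' r θ := Derivation.smul_apply f r θ

/-- The module of logarithmic derivations `Der(−log f)`:
the `R`-submodule of derivations `θ` with `θ f ∈ (f)`. -/
noncomputable def logDer {R : Type*} [CommRing R] [Algebra ℂ R] (f : R) :
    Submodule R (Derivation ℂ R R) :=
  Submodule.comap (derEval f) (Ideal.span {f})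

theorem logDer_fundamental_exact_sequence (n : ℕ)
    (f : MvPolynomial (Fin n) ℂ) :
    letI R := MvPolynomial (Fin n) ℂ
    letI J : Ideal R := Ideal.span ({f} ∪ { g : R | ∃ i : Fin n, pderiv i f = g })
    ∀ (hJ : Ideal.span {f} ≤ J),
    letI φ : Derivation ℂ R R →ₗ[R] R ⧸ Ideal.span {f} :=
      (Ideal.span {f} : Submodule R R).mkQ ∘ₗ derEval f
    letI ψ : (R ⧸ Ideal.span {f}) →ₗ[R] R ⧸ J :=
      Submodule.mapQ (Ideal.span {f} : Submodule R R) (J : Submodule R R) LinearMap.id hJ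
    Function.Injective (logDer f).subtype ∧
      LinearMap.ker φ = logDer f ∧
      LinearMap.range φ = LinearMap.ker ψ ∧
      Function.Surjective ψ := by
  intro hJ
  have key : ∀ θ : Derivation ℂ (MvPolynomial (Fin n) ℂ) (MvPolynomial (Fin n) ℂ),
      θ f = ∑ i : Fin n, θ (X i) * pderiv i f := by
    intro θ
    have h : θ = ∑ i : Fin n, θ (X i) • pderiv i := by
      apply MvPolynomial.derivation_ext
      intro j
      have := map_sum (derEval (X j : MvPolynomial (Fin n) ℂ))
        (fun i : Fin n => θ (X i) • pderiv i) Finset.univ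
      change _ = derEval (X j : MvPolynomial (Fin n) ℂ) _
      rw [this]
      simp [derEval, pderiv_X, Pi.single_apply]
    have h2 : derEval f θ = derEval f (∑ i : Fin n, θ (X i) • pderiv i) := congrArg _ h
    rw [map_sum] at h2
    simpa [derEval] using h2
  refine ⟨Subtype.val_injective, ?_, ?_, ?_⟩
  · rw [LinearMap.ker_comp, Submodule.ker_mkQ]
    rfl
  · apply le_antisymm
    · rintro _ ⟨θ, rfl⟩
      rw [LinearMap.mem_ker]
      simp only [LinearMap.comp_apply, Submodule.mkQ_apply, Submodule.mapQ_apply,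
        LinearMap.id_apply]
      rw [Submodule.Quotient.mk_eq_zero]
      change θ f ∈ _
      rw [key θ]
      exact Ideal.sum_mem _ fun i _ => Ideal.mul_mem_left _ _
        (Ideal.subset_span (Or.inr ⟨i, rfl⟩))
    · intro x hx
      obtain ⟨g, rfl⟩ := Submodule.mkQ_surjective _ x
      rw [LinearMap.mem_ker] at hx
      simp only [Submodule.mkQ_apply, Submodule.mapQ_apply, LinearMap.id_apply] at hx
      rw [Submodule.Quotient.mk_eq_zero] at hx
      rw [← Submodule.mem_comap]
      refine (Submodule.span_le.2 ?_ :
        Ideal.span ({f} ∪ { g | ∃ i : Fin n, pderiv i f = g }) ≤ _) hx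
      rintro _ (rfl | ⟨i, rfl⟩)
      · refine ⟨0, ?_⟩
        rw [map_zero]
        symm
        rw [Submodule.mkQ_apply, Submodule.Quotient.mk_eq_zero]
        exact Ideal.mem_span_singleton_self _
      · exact ⟨pderiv i, rfl⟩
  · intro y
    obtain ⟨g, rfl⟩ := Submodule.mkQ_surjective _ y
    exact ⟨Submodule.Quotient.mk g, rfl⟩
end

section
/- Let n be a natural number, R = MvPolynomial (Fin n) ℂ, and let f ∈ R be nonzero. Then the module of logarithmic derivations M = Der(−log f) is a reflexive R-module: the natural evaluation map from M to its double dual Module.Dual R (Module.Dual R M) is an isomorphism of R-modules. -/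
open MvPolynomial

theorem logDer_eq_sum {n : ℕ} (θ : Derivation ℂ (MvPolynomial (Fin n) ℂ) (MvPolynomial (Fin n) ℂ)) :
    θ = ∑ i, θ (X i) • pderiv i := by
  apply MvPolynomial.derivation_ext
  intro j
  rw [show (∑ i, θ (X i) • pderiv (R := ℂ) i) (X j) = ∑ i, (θ (X i) • pderiv (R := ℂ) i) (X j) from
    map_sum (derEval (X j)) _ _]
  simp [pderiv_X, Pi.single_apply]

theorem logDer_isReflexive (n : ℕ) (f : MvPolynomial (Fin n) ℂ) (hf : f ≠ 0) :
    Function.Bijective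
      (Module.Dual.eval (MvPolynomial (Fin n) ℂ) (↥(logDer f))) := by
  -- coordinate functionals
  let φ : Fin n → Module.Dual (MvPolynomial (Fin n) ℂ) (logDer f) :=
    fun i => (derEval (X i)).comp (logDer f).subtype
  have hφ : ∀ i (θ : logDer f), φ i θ = θ.1 (X i) := fun _ _ => rfl
  have hex : ∀ θ : logDer f, ∃ c, θ.1 f = f * c := fun θ =>
    Ideal.mem_span_singleton.1 θ.2
  choose c hc using hex
  -- the functional `θ ↦ θ f / f`
  let ψ : Module.Dual (MvPolynomial (Fin n) ℂ) (logDer f) :=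
    { toFun := c
      map_add' := fun a b => mul_left_cancel₀ hf (by
        rw [← hc, mul_add, ← hc, ← hc]; rfl)
      map_smul' := fun r a => mul_left_cancel₀ hf (by
        rw [← hc, RingHom.id_apply, smul_eq_mul, mul_left_comm, ← hc]; rfl) }
  have hψ : ∀ θ : logDer f, f * ψ θ = θ.1 f := fun θ => (hc θ).symm
  have hsum : ∀ (g : MvPolynomial (Fin n) ℂ)
      (a : Fin n → MvPolynomial (Fin n) ℂ),
      (∑ i, a i • pderiv (R := ℂ) i) g = ∑ i, a i * pderiv i g := fun g a =>
    map_sum (derEval g) _ _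
  constructor
  · intro a b hab
    apply Subtype.ext
    apply MvPolynomial.derivation_ext
    intro i
    exact LinearMap.congr_fun hab (φ i)
  · intro Φ
    have h1 : f • ψ = ∑ i, pderiv i f • φ i := by
      ext1 θ
      rw [LinearMap.smul_apply, smul_eq_mul, hψ, LinearMap.sum_apply]
      conv_lhs => rw [logDer_eq_sum θ.1, hsum]
      exact Finset.sum_congr rfl fun i _ => mul_comm _ _
    have hmem : (∑ i, Φ (φ i) • pderiv (R := ℂ) i) ∈ logDer f := by
      refine Ideal.mem_span_singleton.2 ⟨Φ ψ, ?_⟩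
      change (∑ i, Φ (φ i) • pderiv (R := ℂ) i) f = _
      rw [hsum, ← smul_eq_mul f, ← map_smul, h1, map_sum]
      refine Finset.sum_congr rfl fun i _ => ?_
      rw [map_smul, smul_eq_mul, mul_comm]
    have hfd : ∀ i : Fin n, f • pderiv (R := ℂ) i ∈ logDer f := fun i =>
      Ideal.mem_span_singleton.2 ⟨pderiv i f, rfl⟩
    have key : ∀ (α : Module.Dual (MvPolynomial (Fin n) ℂ) (logDer f)) (θ : logDer f)
        (a : Fin n → MvPolynomial (Fin n) ℂ), θ.1 = ∑ i, a i • pderiv (R := ℂ) i →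
        f * α θ = ∑ i, a i * α ⟨_, hfd i⟩ := by
      intro α θ a h
      have : f • θ = ∑ i, a i • (⟨_, hfd i⟩ : logDer f) := by
        apply Subtype.ext
        rw [Submodule.coe_smul, h, Finset.smul_sum, Submodule.coe_sum]
        exact Finset.sum_congr rfl fun i _ => smul_comm _ _ _
      rw [← smul_eq_mul, ← map_smul, this, map_sum]
      exact Finset.sum_congr rfl fun i _ => map_smul _ _ _
    refine ⟨⟨_, hmem⟩, ?_⟩
    ext1 α
    apply mul_left_cancel₀ hf
    rw [Module.Dual.eval_apply, key α _ _ rfl]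
    have h2 : f • α = ∑ i, α ⟨_, hfd i⟩ • φ i := by
      ext1 θ
      rw [LinearMap.smul_apply, smul_eq_mul, key α θ _ (logDer_eq_sum θ.1), LinearMap.sum_apply]
      exact Finset.sum_congr rfl fun i _ => mul_comm _ _
    rw [← smul_eq_mul f, ← map_smul, h2, map_sum]
    refine Finset.sum_congr rfl fun i _ => ?_
    rw [map_smul, smul_eq_mul, mul_comm]
end

section
/- Let R = MvPowerSeries (Fin 2) ℂ be the ring of formal power series in two variables over ℂ, and let f ∈ R be nonzero, a non-unit, and squarefree (Squarefree f). Then the module of logarithmic derivations Der(−log f) is a free R-module of rank 2. -/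
open Pointwise in
/-- Over a Noetherian local domain with a prime element `x` such that `R/x` is a PID, the preimage
of a nonzero principal ideal under a linear form on a free module of rank two is free. -/
theorem free_comap_span_aux {R D : Type*} [CommRing R] [IsDomain R] [IsLocalRing R]
    [IsNoetherianRing R] [AddCommGroup D] [Module R D] (e : D ≃ₗ[R] (Fin 2 → R))
    (x : R) (hx : Prime x) [IsPrincipalIdealRing (R ⧸ Ideal.span {x})]
    (φ : D →ₗ[R] R) (f : R) (hf : f ≠ 0) :
    Module.Free R (Submodule.comap φ (Ideal.span {f})) := by
  have : Module.Finite R D := Module.Finite.equiv e.symm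
  have hprime : (Ideal.span {x}).IsPrime := (Ideal.span_singleton_prime hx.ne_zero).2 hx
  have : IsDomain (R ⧸ Ideal.span {x}) := Ideal.Quotient.isDomain _
  set M := Submodule.comap φ (Ideal.span {f}) with hM
  have : Module.FinitePresentation R M := Module.finitePresentation_of_finite R M
  have hregD : ∀ d d' : D, x • d = x • d' → d = d' := by
    intro d d' h
    apply e.injective
    ext i
    have h2 := congrFun (congrArg e h) i
    simpa [hx.ne_zero] using h2
  have reg : IsSMulRegular M x := by
    intro m m' h
    exact Subtype.ext (hregD _ _ (congrArg Subtype.val h))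
  have mem : x ∈ (⊥ : Ideal R).jacobson := by
    rw [IsLocalRing.jacobson_eq_maximalIdeal ⊥ bot_ne_top]
    exact (IsLocalRing.mem_maximalIdeal x).2 hx.not_isUnit
  rw [← Module.free_quotSMulTop_iff_free R M mem reg]
  have : Module.Finite (R ⧸ Ideal.span {x}) (QuotSMulTop x M) :=
    Module.Finite.of_restrictScalars_finite R (R ⧸ Ideal.span {x}) (QuotSMulTop x M)
  have : Module.IsTorsionFree (R ⧸ Ideal.span {x}) (QuotSMulTop x M) := by
    refine Module.isTorsionFree_iff_smul_eq_zero.2 ?_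
    intro r q h
    obtain ⟨r, rfl⟩ := Ideal.Quotient.mk_surjective r
    obtain ⟨m, rfl⟩ := Submodule.Quotient.mk_surjective _ q
    by_cases hr : x ∣ r
    · left
      exact Ideal.Quotient.eq_zero_iff_mem.2 (Ideal.mem_span_singleton.2 hr)
    right
    have h1 : (Submodule.Quotient.mk (r • m) : QuotSMulTop x M) = 0 := h
    rw [Submodule.Quotient.mk_eq_zero, Submodule.mem_smul_pointwise_iff_exists] at h1
    obtain ⟨m', -, h1⟩ := h1
    have h2 : x • (m' : D) = r • (m : D) := congrArg Subtype.val h1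
    have h3 : ∀ i, ∃ c, e m i = x * c := by
      intro i
      have h4 := congrFun (congrArg e h2) i
      simp only [map_smul, Pi.smul_apply, smul_eq_mul] at h4
      exact (hx.dvd_or_dvd (Dvd.intro _ h4)).resolve_left hr
    choose c hc using h3
    have h5 : (m : D) = x • e.symm c := by
      apply e.injective
      ext i
      simp [hc]
    obtain ⟨a, ha⟩ := Ideal.mem_span_singleton.1 (Submodule.mem_comap.1 m.2)
    obtain ⟨b, hb⟩ := Ideal.mem_span_singleton.1 (Submodule.mem_comap.1 m'.2)
    have h6 : x * b = r * a := by
      have h7 := congrArg φ h2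
      simp only [map_smul, smul_eq_mul, ha, hb] at h7
      apply mul_left_cancel₀ hf
      linear_combination h7
    obtain ⟨a', rfl⟩ := (hx.dvd_or_dvd (Dvd.intro _ h6)).resolve_left hr
    have h8 : e.symm c ∈ M := by
      refine Submodule.mem_comap.2 (Ideal.mem_span_singleton.2 ⟨a', ?_⟩)
      rw [h5, map_smul, smul_eq_mul] at ha
      apply mul_left_cancel₀ hx.ne_zero
      linear_combination ha
    rw [Submodule.Quotient.mk_eq_zero, Submodule.mem_smul_pointwise_iff_exists]
    exact ⟨⟨_, h8⟩, trivial, Subtype.ext h5.symm⟩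
  exact Module.free_of_finite_type_torsion_free'

/-- The rank of the preimage of a nonzero principal ideal. -/
theorem rank_comap_span_aux {R D : Type*} [CommRing R] [IsDomain R]
    [AddCommGroup D] [Module R D] (e : D ≃ₗ[R] (Fin 2 → R))
    (φ : D →ₗ[R] R) (f : R) (hf : f ≠ 0) :
    Module.rank R (Submodule.comap φ (Ideal.span {f})) = 2 := by
  have hD : Module.rank R D = 2 := by
    have h := e.lift_rank_eq
    rw [rank_fin_fun] at h
    simpa using h
  apply le_antisymm
  · exact hD ▸ Submodule.rank_le _
  · rw [← hD]
    let g : D →ₗ[R] Submodule.comap φ (Ideal.span {f}) :=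
      (f • LinearMap.id).codRestrict _ (fun d => by
        simp [Submodule.mem_comap, Ideal.mem_span_singleton])
    refine LinearMap.rank_le_of_injective g ?_
    intro d d' h
    apply e.injective
    ext i
    have h2 := congrFun (congrArg e (congrArg Subtype.val h)) i
    simpa [g, hf] using h2

/-- Restriction of power series in two variables to the line `X 0 = 0`. -/
noncomputable def resAux : MvPowerSeries (Fin 2) ℂ →+* PowerSeries ℂ :=
  ((MvPowerSeries.renameEquiv ℂ (Equiv.ofUnique (Fin 1) Unit)).toRingEquiv.toRingHom.comp
    (PowerSeries.constantCoeff (R := MvPowerSeries (Fin 1) ℂ))).comp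
    (MvPowerSeries.finSuccEquiv ℂ 1).toRingEquiv.toRingHom

theorem resAux_surj : Function.Surjective resAux := by
  have h1 : Function.Surjective (MvPowerSeries.renameEquiv ℂ (Equiv.ofUnique (Fin 1) Unit)) :=
    (MvPowerSeries.renameEquiv ℂ (Equiv.ofUnique (Fin 1) Unit)).surjective
  have h2 : Function.Surjective (PowerSeries.constantCoeff (R := MvPowerSeries (Fin 1) ℂ)) :=
    PowerSeries.constantCoeff_surj
  exact (h1.comp h2).comp (MvPowerSeries.finSuccEquiv ℂ 1).surjective

theorem resAux_eq_zero {g : MvPowerSeries (Fin 2) ℂ} (h : resAux g = 0) :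
    MvPowerSeries.X 0 ∣ g := by
  have h1 : PowerSeries.constantCoeff (MvPowerSeries.finSuccEquiv ℂ 1 g) = 0 := by
    apply (MvPowerSeries.renameEquiv ℂ (Equiv.ofUnique (Fin 1) Unit)).injective
    rw [map_zero]
    exact h
  obtain ⟨k, hk⟩ := PowerSeries.X_dvd_iff.2 h1
  refine ⟨(MvPowerSeries.finSuccEquiv ℂ 1).symm k, ?_⟩
  apply (MvPowerSeries.finSuccEquiv ℂ 1).injective
  rw [hk, map_mul, AlgEquiv.apply_symm_apply, MvPowerSeries.finSuccEquiv_X_zero]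

theorem resAux_X0 : resAux (MvPowerSeries.X 0) = 0 := by
  simp [resAux, MvPowerSeries.finSuccEquiv_X_zero]

theorem resAux_X1 : resAux (MvPowerSeries.X 1) = PowerSeries.X := by
  have := MvPowerSeries.finSuccEquiv_X_succ (R := ℂ) (n := 1) 0
  simp only [Fin.succ_zero_eq_one] at this
  simp [resAux, this]
  rfl

theorem resAux_C (c : ℂ) : resAux (algebraMap ℂ _ c) = PowerSeries.C c := by
  have h1 := MvPowerSeries.finSuccEquiv_C (R := ℂ) (n := 1) c
  have h2 : resAux (algebraMap ℂ _ c) =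
    MvPowerSeries.rename (Equiv.ofUnique (Fin 1) Unit) (PowerSeries.constantCoeff
      (MvPowerSeries.finSuccEquiv ℂ 1 (MvPowerSeries.C c))) := rfl
  rw [h2, h1, PowerSeries.constantCoeff_C, MvPowerSeries.rename_C]
  rfl

theorem resAux_ker : RingHom.ker resAux = Ideal.span {MvPowerSeries.X 0} := by
  ext g
  rw [RingHom.mem_ker, Ideal.mem_span_singleton]
  refine ⟨resAux_eq_zero, ?_⟩
  rintro ⟨k, rfl⟩
  rw [map_mul, resAux_X0, zero_mul]

theorem prime_X0_aux : Prime (MvPowerSeries.X 0 : MvPowerSeries (Fin 2) ℂ) := by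
  rw [← Ideal.span_singleton_prime, ← resAux_ker]
  · exact RingHom.ker_isPrime _
  · intro h
    have := congrArg (MvPowerSeries.finSuccEquiv ℂ 1) h
    rw [MvPowerSeries.finSuccEquiv_X_zero, map_zero] at this
    exact PowerSeries.X_ne_zero this

theorem pid_aux : IsPrincipalIdealRing
    (MvPowerSeries (Fin 2) ℂ ⧸ Ideal.span {(MvPowerSeries.X 0 : MvPowerSeries (Fin 2) ℂ)}) := by
  rw [← resAux_ker]
  let E := RingHom.quotientKerEquivOfSurjective resAux_surj
  exact IsPrincipalIdealRing.of_surjective E.symm.toRingHom E.symm.surjective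

theorem decomp_aux (g : MvPowerSeries (Fin 2) ℂ) : ∃ (c : ℂ) (g0 g1 : MvPowerSeries (Fin 2) ℂ),
    g = algebraMap ℂ _ c + MvPowerSeries.X 0 * g0 + MvPowerSeries.X 1 * g1 := by
  obtain ⟨g1, hg1⟩ := resAux_surj (PowerSeries.mk fun p => PowerSeries.coeff (p + 1) (resAux g))
  have h := PowerSeries.eq_X_mul_shift_add_const (resAux g)
  rw [← hg1] at h
  obtain ⟨g0, hg0⟩ := resAux_eq_zero (g := g - MvPowerSeries.X 1 * g1 -
      algebraMap ℂ _ (PowerSeries.constantCoeff (resAux g))) (by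
    rw [map_sub, map_sub, map_mul, resAux_X1, resAux_C]
    linear_combination h)
  exact ⟨_, g0, g1, by linear_combination hg0⟩

theorem der_ext_aux (δ : Derivation ℂ (MvPowerSeries (Fin 2) ℂ) (MvPowerSeries (Fin 2) ℂ))
    (h0 : δ (MvPowerSeries.X 0) = 0) (h1 : δ (MvPowerSeries.X 1) = 0) : δ = 0 := by
  set I := IsLocalRing.maximalIdeal (MvPowerSeries (Fin 2) ℂ) with hI
  have hX : ∀ i : Fin 2, MvPowerSeries.X i ∈ I := by
    intro i
    rw [hI, IsLocalRing.mem_maximalIdeal, mem_nonunits_iff, MvPowerSeries.isUnit_iff_constantCoeff]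
    simp
  have key : ∀ k g, δ g ∈ I ^ k := by
    intro k
    induction k with
    | zero => intro g; simp
    | succ k ih =>
      intro g
      obtain ⟨c, g0, g1, rfl⟩ := decomp_aux g
      simp only [map_add, Derivation.map_algebraMap, Derivation.leibniz, h0, h1,
        zero_add, smul_eq_mul, mul_zero, add_zero]
      rw [pow_succ']
      exact add_mem (Ideal.mul_mem_mul (hX 0) (ih _)) (Ideal.mul_mem_mul (hX 1) (ih _))
  ext1 g
  have h2 : δ g ∈ ⨅ k, I ^ k := by
    rw [Submodule.mem_iInf]
    exact fun k => key k g
  rw [Ideal.iInf_pow_eq_bot_of_isLocalRing I (IsLocalRing.maximalIdeal.isMaximal _).ne_top] at h2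
  simpa using h2

/-- Derivations of the power series ring are determined by the values on the two variables. -/
noncomputable def derEquivAux : Derivation ℂ (MvPowerSeries (Fin 2) ℂ) (MvPowerSeries (Fin 2) ℂ)
    ≃ₗ[MvPowerSeries (Fin 2) ℂ] (Fin 2 → MvPowerSeries (Fin 2) ℂ) :=
  LinearEquiv.ofBijective
    (LinearMap.pi fun i => derEval (MvPowerSeries.X i : MvPowerSeries (Fin 2) ℂ)) (by
    constructor
    · rw [injective_iff_map_eq_zero]
      intro δ h
      exact der_ext_aux δ (congrFun h 0) (congrFun h 1)
    · intro v
      refine ⟨v 0 • MvPowerSeries.pderiv ℂ 0 + v 1 • MvPowerSeries.pderiv ℂ 1, ?_⟩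
      funext i
      fin_cases i <;> simp [derEval])

theorem logDer_free_rank_two_of_squarefree_powerSeries
    (f : MvPowerSeries (Fin 2) ℂ) (hf0 : f ≠ 0) (hfu : ¬ IsUnit f)
    (hsq : Squarefree f) :
    Module.Free (MvPowerSeries (Fin 2) ℂ) (↥(logDer f)) ∧
      Module.rank (MvPowerSeries (Fin 2) ℂ) (↥(logDer f)) = 2 := by
  have := pid_aux
  have : IsDomain (MvPowerSeries (Fin 2) ℂ) := NoZeroDivisors.to_isDomain _
  exact ⟨free_comap_span_aux derEquivAux _ prime_X0_aux (derEval f) f hf0,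
    rank_comap_span_aux derEquivAux (derEval f) f hf0⟩
end

section
/- Let R = MvPolynomial (Fin 2) ℂ be the polynomial ring in two variables over ℂ, and let f ∈ R be a nonconstant squarefree polynomial. Then the module of logarithmic derivations Der(−log f) is a finitely generated projective R-module (equivalently, it is locally free of rank 2 at every prime of R). -/
open MvPolynomial

open Polynomial in
/-- An ideal of `A[X]` over a PID `A` is free, hence projective, over `A`. -/
theorem aux_ideal_projective {A : Type*} [CommRing A] [IsDomain A] [IsPrincipalIdealRing A]
    (I : Submodule A A[X]) : Module.Projective A I := by
  let J : ℕ → Ideal A := fun n => (I ⊓ Polynomial.degreeLE A n).map (Polynomial.lcoeff A n)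
  have hJ : ∀ n : ℕ, ∃ p ∈ I, p.degree ≤ (n : ℕ) ∧ Ideal.span {p.coeff n} = J n := by
    intro n
    obtain ⟨g, hg⟩ := (IsPrincipalIdealRing.principal (J n)).principal
    have hgm : g ∈ J n := by rw [hg]; exact Submodule.mem_span_singleton_self g
    obtain ⟨p, hp, hpg⟩ := hgm
    refine ⟨p, hp.1, Polynomial.mem_degreeLE.mp hp.2, ?_⟩
    rw [hg, ← hpg]; rfl
  choose p hpI hpd hpJ using hJ
  classical
  let s : Polynomial.Sequence A :=
    { elems' := fun n => if (p n).coeff n = 0 then Polynomial.X ^ n else p n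
      degree_eq' := by
        intro n
        split_ifs with h
        · exact Polynomial.degree_X_pow n
        · exact le_antisymm (hpd n) (Polynomial.le_degree_of_ne_zero h) }
  let S := {n // (p n).coeff n ≠ 0}
  let v : S → I := fun n => ⟨p n, hpI n⟩
  have hli : LinearIndependent A v := by
    have h1 := s.linearIndependent.comp (Subtype.val : S → ℕ) Subtype.val_injective
    refine LinearIndependent.of_comp I.subtype ?_
    have h2 : (I.subtype ∘ v : S → A[X]) = s ∘ (Subtype.val : S → ℕ) := by
      funext n
      exact (if_neg n.2 : s n.1 = p n.1).symm
    rw [h2]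
    exact h1
  have hsp : ∀ n : ℕ, ∀ q (hq : q ∈ I), q.degree < n →
      (⟨q, hq⟩ : I) ∈ Submodule.span A (Set.range v) := by
    intro n
    induction n with
    | zero =>
      intro q hq hd
      have : q = 0 := by
        rw [← Polynomial.degree_eq_bot]
        simpa [Nat.WithBot.lt_zero_iff] using hd
      subst this
      exact Submodule.zero_mem _
    | succ n ih =>
      intro q hq hd
      have hd' : q.degree ≤ n := by
        rw [Polynomial.degree_le_iff_coeff_zero]
        intro m hm
        apply Polynomial.coeff_eq_zero_of_degree_lt
        refine lt_of_lt_of_le hd ?_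
        exact_mod_cast hm
      have hqJ : q.coeff n ∈ J n := ⟨q, ⟨hq, Polynomial.mem_degreeLE.mpr hd'⟩, rfl⟩
      rw [← hpJ, Ideal.mem_span_singleton'] at hqJ
      obtain ⟨a, ha⟩ := hqJ
      by_cases h0 : (p n).coeff n = 0
      · apply ih q hq
        rw [Polynomial.degree_lt_iff_coeff_zero]
        intro m hm
        rcases hm.eq_or_lt with rfl | hm
        · rw [← ha, h0, mul_zero]
        · exact Polynomial.coeff_eq_zero_of_degree_lt (lt_of_le_of_lt hd' (by exact_mod_cast hm))
      · have hr : q - a • p n ∈ I := I.sub_mem hq (I.smul_mem a (hpI n))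
        have hrd : (q - a • p n).degree < n := by
          rw [Polynomial.degree_lt_iff_coeff_zero]
          intro m hm
          rcases hm.eq_or_lt with rfl | hm
          · simp [ha]
          · have e1 : q.coeff m = 0 :=
              Polynomial.coeff_eq_zero_of_degree_lt (lt_of_le_of_lt hd' (by exact_mod_cast hm))
            have e2 : (p n).coeff m = 0 :=
              Polynomial.coeff_eq_zero_of_degree_lt (lt_of_le_of_lt (hpd n) (by exact_mod_cast hm))
            simp [e1, e2]
        have h2 := ih _ hr hrd
        have h3 : a • v ⟨n, h0⟩ ∈ Submodule.span A (Set.range v) :=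
          Submodule.smul_mem _ _ (Submodule.subset_span ⟨_, rfl⟩)
        have h4 := Submodule.add_mem _ h2 h3
        convert h4 using 1
        ext1
        simp [v]
  have hb : ⊤ ≤ Submodule.span A (Set.range v) := by
    rintro ⟨q, hq⟩ -
    exact hsp (q.natDegree + 1) q hq (lt_of_le_of_lt Polynomial.degree_le_natDegree (by
      exact_mod_cast Nat.lt_succ_self _))
  exact Module.Projective.of_basis (Module.Basis.mk hli hb)

/-- Schanuel-type lemma. -/
theorem aux_schanuel {R P F M : Type*} [CommRing R] [AddCommGroup P] [AddCommGroup F]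
    [AddCommGroup M] [Module R P] [Module R F] [Module R M]
    [Module.Projective R P] [Module.Projective R F]
    (g : P →ₗ[R] M) (hg : Function.Surjective g) (h : F →ₗ[R] M) (hh : Function.Surjective h)
    (hL : Module.Projective R (LinearMap.ker h)) : Module.Projective R (LinearMap.ker g) := by
  obtain ⟨s, hs⟩ := Module.projective_lifting_property h g hh
  obtain ⟨t, ht⟩ := Module.projective_lifting_property g h hg
  have hs' : ∀ x, h (s x) = g x := fun x => LinearMap.congr_fun hs x
  have ht' : ∀ x, g (t x) = h x := fun x => LinearMap.congr_fun ht x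
  let i : LinearMap.ker g →ₗ[R] P × LinearMap.ker h :=
    (LinearMap.ker g).subtype.prod
      (LinearMap.codRestrict _ (s ∘ₗ (LinearMap.ker g).subtype) (by
        rintro ⟨x, hx⟩
        simpa [hs'] using hx))
  let r : P × LinearMap.ker h →ₗ[R] LinearMap.ker g :=
    LinearMap.codRestrict _
      ((LinearMap.id - t ∘ₗ s).coprod (t ∘ₗ (LinearMap.ker h).subtype)) (by
        rintro ⟨x, y, hy⟩
        have hy' : h y = 0 := hy
        simp [hs', ht', hy'])
  refine Module.Projective.of_split i r ?_
  ext x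
  simp [i, r]

open Polynomial PolynomialModule TensorProduct in
theorem aux_resolution {A M : Type*} [CommRing A] [AddCommGroup M] [Module A M] [Module A[X] M]
    [IsScalarTower A A[X] M] (hM : Module.Projective A M) :
    ∃ h : PolynomialModule A M →ₗ[A[X]] M, Function.Surjective h ∧
      Module.Projective A[X] (PolynomialModule A M) ∧
      Module.Projective A[X] (LinearMap.ker h) := by
  have hF : Module.Projective A[X] (PolynomialModule A M) :=
    Module.Projective.of_equiv (polynomialTensorProductLEquivPolynomialModule (R := A) (M := M))
  let e := polynomialTensorProductLEquivPolynomialModule (R := A) (M := M)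
  have he : ∀ m, e ((1 : A[X]) ⊗ₜ[A] m) = single A 0 m := by
    intro m
    change LinearMap.liftBaseChange A[X] (lsingle A (M := M) 0) ((1 : A[X]) ⊗ₜ[A] m) = _
    rw [LinearMap.liftBaseChange_tmul, one_smul]
    rfl
  let h : PolynomialModule A M →ₗ[A[X]] M :=
    (LinearMap.liftBaseChange A[X] (LinearMap.id : M →ₗ[A] M)) ∘ₗ e.symm.toLinearMap
  have h0 : ∀ m, h (single A 0 m) = m := by
    intro m
    simp [h, ← he]
  have hXs : ∀ n (m : M), single A (n + 1) m = (Polynomial.X : A[X]) • single A n m := by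
    intro n m
    rw [← Polynomial.monomial_one_one_eq_X, monomial_smul_single, one_smul, add_comm]
  let x : M →ₗ[A] M := (LinearMap.lsmul A[X] M Polynomial.X).restrictScalars A
  have hx : ∀ m, x m = (Polynomial.X : A[X]) • m := fun m => rfl
  let δ : PolynomialModule A M →ₗ[A[X]] PolynomialModule A M :=
    { toFun := fun q => (Polynomial.X : A[X]) • q - PolynomialModule.map A x q
      map_add' := by
        intro a b
        rw [smul_add, map_add]; abel
      map_smul' := by
        intro p q
        have := PolynomialModule.map_smul A x p q
        rw [Algebra.algebraMap_self, Polynomial.map_id] at this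
        rw [this, RingHom.id_apply, smul_sub, smul_comm] }
  have hδ : ∀ q, δ q = (Polynomial.X : A[X]) • q - PolynomialModule.map A x q := fun q => rfl
  have hhX : ∀ n m, h (single A n m) = (Polynomial.X ^ n : A[X]) • m := by
    intro n
    induction n with
    | zero => intro m; simp [h0]
    | succ n ih => intro m; rw [hXs, _root_.map_smul, ih, smul_smul, pow_succ']
  have hhδ : ∀ q, h (δ q) = 0 := by
    intro q
    induction q using PolynomialModule.induction_linear with
    | zero => simp
    | add a b ha hb => simp [ha, hb]
    | single n m =>
      rw [hδ, map_sub, _root_.map_smul, map_single, hhX, hhX, hx, smul_comm, sub_self]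
  have hδi : Function.Injective δ := by
    rw [injective_iff_map_eq_zero]
    intro q hq
    have hc : ∀ n, q.coeff n = (Polynomial.X : A[X]) • q.coeff (n + 1) := by
      intro n
      have hm : (PolynomialModule.map A x q).coeff (n + 1) =
          (Polynomial.X : A[X]) • q.coeff (n + 1) := rfl
      have hX : ((Polynomial.X : A[X]) • q).coeff (n + 1) = q.coeff n := by
        rw [← Polynomial.monomial_one_one_eq_X, monomial_smul_apply]
        simp
      rw [hδ, sub_eq_zero] at hq
      rw [← hX, hq, hm]
    have hall : ∀ k n, n + k > q.coeff.support.sup id → q.coeff n = 0 := by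
      intro k
      induction k with
      | zero =>
        intro n hn
        by_contra hne
        have := Finset.le_sup (f := id) (Finsupp.mem_support_iff.mpr hne)
        simp only [id] at this
        have h5 : n > q.coeff.support.sup id := by simpa using hn
        exact absurd this (not_le.mpr h5)
      | succ k ih =>
        intro n hn
        rw [hc, ih (n + 1) (by omega), smul_zero]
    ext n
    exact hall (q.coeff.support.sup id + 1) n (by omega)
  have hker : ∀ q, q - single A 0 (h q) ∈ LinearMap.range δ := by
    intro q
    induction q using PolynomialModule.induction_linear with
    | zero => simp
    | add a b ha hb =>
      have := Submodule.add_mem _ ha hb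
      rw [map_add, single_add]
      convert this using 1
      abel
    | single n m =>
      induction n generalizing m with
      | zero => simp [h0]
      | succ n ih =>
        have h1 := ih ((Polynomial.X : A[X]) • m)
        have h2 := Submodule.add_mem _ h1 (LinearMap.mem_range_self δ (single A n m))
        convert h2 using 1
        rw [hδ, map_single, hx, ← hXs, hhX, hhX, smul_smul, pow_succ]
        abel
  have hrange : LinearMap.range δ = LinearMap.ker h := by
    apply le_antisymm
    · rintro _ ⟨q, rfl⟩
      exact hhδ q
    · intro q hq
      have := hker q
      rw [LinearMap.mem_ker.mp hq, single_zero, sub_zero] at this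
      exact this
  refine ⟨h, fun m => ⟨_, h0 m⟩, hF, ?_⟩
  exact Module.Projective.of_equiv
    ((LinearEquiv.ofInjective δ hδi).trans (LinearEquiv.ofEq _ _ hrange))

open Polynomial in
theorem aux_ker_projective {A P : Type*} [CommRing A] [IsDomain A] [IsPrincipalIdealRing A]
    [AddCommGroup P] [Module A[X] P] [Module.Projective A[X] P] (g : P →ₗ[A[X]] A[X]) :
    Module.Projective A[X] (LinearMap.ker g) := by
  have hI : Module.Projective A (LinearMap.range g) :=
    aux_ideal_projective ((LinearMap.range g).restrictScalars A)
  obtain ⟨h, hh, hF, hL⟩ := aux_resolution (A := A) (M := LinearMap.range g) hI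
  have := aux_schanuel g.rangeRestrict g.surjective_rangeRestrict h hh hL
  rwa [LinearMap.ker_rangeRestrict] at this

open Polynomial in
theorem aux_ker_projective' {A R P : Type*} [CommRing A] [IsDomain A] [IsPrincipalIdealRing A]
    [CommRing R] (e : R ≃+* A[X])
    [AddCommGroup P] [Module R P] [Module.Projective R P] (g : P →ₗ[R] R) :
    Module.Projective R (LinearMap.ker g) := by
  let _ : Module A[X] P := Module.compHom P e.symm.toRingHom
  have hs : ∀ (a : A[X]) (x : P), a • x = e.symm a • x := fun _ _ => rfl
  let i1 := RingHomInvPair.of_ringEquiv e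
  let i2 := RingHomInvPair.symm (e : R →+* A[X]) (e.symm : A[X] →+* R)
  let E : P ≃ₛₗ[(e : R →+* A[X])] P :=
    { AddEquiv.refl P with
      map_smul' := by intro r x; simp [hs] }
  have : Module.Projective A[X] P := Module.Projective.of_equiv E
  let g' : P →ₗ[A[X]] A[X] :=
    { toFun := fun x => e (g x)
      map_add' := by intro x y; simp
      map_smul' := by intro a x; simp [hs] }
  have hk := aux_ker_projective g'
  let E' : LinearMap.ker g' ≃ₛₗ[(e.symm : A[X] →+* R)] LinearMap.ker g :=
    { toFun := fun x => ⟨x.1, by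
        have h : e (g x.1) = 0 := x.2
        exact (map_eq_zero_iff e e.injective).mp h⟩
      invFun := fun x => ⟨x.1, by
        have h : g x.1 = 0 := x.2
        change e (g x.1) = 0
        rw [h, map_zero]⟩
      left_inv := fun _ => rfl
      right_inv := fun _ => rfl
      map_add' := fun _ _ => rfl
      map_smul' := fun _ _ => rfl }
  exact Module.Projective.of_equiv E'

noncomputable def auxDerEquiv :
    Derivation ℂ (MvPolynomial (Fin 2) ℂ) (MvPolynomial (Fin 2) ℂ) ≃ₗ[MvPolynomial (Fin 2) ℂ]
      (Fin 2 → MvPolynomial (Fin 2) ℂ) :=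
  { (mkDerivationEquiv (σ := Fin 2) ℂ (A := MvPolynomial (Fin 2) ℂ)).symm.toAddEquiv with
    map_smul' := fun _ _ => rfl }

theorem logDer_finite_projective_of_squarefree_plane_curve
    (f : MvPolynomial (Fin 2) ℂ) (hconst : ∀ c : ℂ, f ≠ C c)
    (hsq : Squarefree f) :
    Module.Finite (MvPolynomial (Fin 2) ℂ) (↥(logDer f)) ∧
      Module.Projective (MvPolynomial (Fin 2) ℂ) (↥(logDer f)) := by
  have hf0 : f ≠ 0 := by simpa using hconst 0
  have hfin : Module.Finite (MvPolynomial (Fin 2) ℂ)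
      (Derivation ℂ (MvPolynomial (Fin 2) ℂ) (MvPolynomial (Fin 2) ℂ)) :=
    Module.Finite.equiv auxDerEquiv.symm
  have hproj : Module.Projective (MvPolynomial (Fin 2) ℂ)
      (Derivation ℂ (MvPolynomial (Fin 2) ℂ) (MvPolynomial (Fin 2) ℂ)) :=
    Module.Projective.of_equiv auxDerEquiv.symm
  have hN := isNoetherian_of_isNoetherianRing_of_finite (MvPolynomial (Fin 2) ℂ)
      (Derivation ℂ (MvPolynomial (Fin 2) ℂ) (MvPolynomial (Fin 2) ℂ))
  refine ⟨inferInstance, ?_⟩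
  have : IsPrincipalIdealRing (MvPolynomial (Fin 1) ℂ) :=
    IsPrincipalIdealRing.of_surjective (uniqueAlgEquiv ℂ (Fin 1)).symm.toRingEquiv.toRingHom
      (uniqueAlgEquiv ℂ (Fin 1)).symm.surjective
  let g : (Derivation ℂ (MvPolynomial (Fin 2) ℂ) (MvPolynomial (Fin 2) ℂ)) ×
      MvPolynomial (Fin 2) ℂ →ₗ[MvPolynomial (Fin 2) ℂ] MvPolynomial (Fin 2) ℂ :=
    (derEval f).coprod (-(LinearMap.toSpanSingleton _ _ f))
  have hg : ∀ x, g x = x.1 f - x.2 * f := by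
    intro x
    simp [g, derEval, sub_eq_add_neg]
  have hk := aux_ker_projective' (finSuccEquiv ℂ 1).toRingEquiv g
  let φ : LinearMap.ker g →ₗ[MvPolynomial (Fin 2) ℂ] logDer f :=
    LinearMap.codRestrict _ (LinearMap.fst _ _ _ ∘ₗ (LinearMap.ker g).subtype) (by
      rintro ⟨x, hx⟩
      rw [LinearMap.mem_ker, hg, sub_eq_zero] at hx
      exact Ideal.mem_span_singleton'.mpr ⟨x.2, hx.symm⟩)
  refine Module.Projective.of_equiv (LinearEquiv.ofBijective φ ⟨?_, ?_⟩)
  · rw [injective_iff_map_eq_zero]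
    rintro ⟨⟨θ, c⟩, hx⟩ h0
    have h1 : θ = 0 := congrArg Subtype.val h0
    rw [LinearMap.mem_ker, hg, h1] at hx
    have h2 : c = 0 := by simpa [hf0] using hx
    simp [h1, h2]
  · rintro ⟨θ, hθ⟩
    obtain ⟨c, hc⟩ := Ideal.mem_span_singleton'.mp hθ
    refine ⟨⟨(θ, c), ?_⟩, rfl⟩
    rw [LinearMap.mem_ker, hg, sub_eq_zero]
    exact hc.symm
end

section
/- Let n ≥ 2, let R = MvPowerSeries (Fin n) ℂ be the ring of formal power series in n variables over ℂ with residue field ℂ, and let f ∈ R be nonzero, a non-unit, and squarefree. Let J be the Jacobian ideal of f, namely the ideal of R generated by f together with all elements θ f for θ ∈ Derivation ℂ R R, and assume R ⧸ J ≠ 0 (i.e., the divisor defined by f is singular). Then the module of logarithmic derivations Der(−log f) is a free R-module (necessarily of rank n) if and only if the R-module R ⧸ J is Cohen–Macaulay of dimension n − 2, i.e., if and only if the depth of R ⧸ J over R — the least i such that Ext^i_R(ℂ, R ⧸ J) ≠ 0 — equals n − 2. -/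
open CategoryTheory

/-- The depth of a module `M` over a local ring `R`: the least `i` such that
`Ext^i_R(k, M) ≠ 0`, where `k` is the residue field of `R`. -/
noncomputable def moduleDepth (R : Type) [CommRing R] [IsLocalRing R]
    (M : Type) [AddCommGroup M] [Module R M] : ℕ :=
  sInf {i : ℕ |
    ¬ Subsingleton (((Ext R (ModuleCat R) i).obj
      (Opposite.op (ModuleCat.of R (IsLocalRing.ResidueField R)))).obj
        (ModuleCat.of R M))}


theorem ext_cmp {R : Type} [CommRing R] (X Y : ModuleCat.{0} R) (i : ℕ) :
    Subsingleton (((Ext R (ModuleCat R) i).obj (Opposite.op X)).obj Y) ↔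
      Subsingleton (Abelian.Ext X Y i) := by
  let P : ProjectiveResolution X := ProjectiveResolution.of X
  have h1 : Subsingleton (((Ext R (ModuleCat R) i).obj (Opposite.op X)).obj Y) ↔
      (P.complex.linearYonedaObj R Y).ExactAt i := by
    rw [HomologicalComplex.exactAt_iff_isZero_homology,
      ← (P.isoExt i Y).isZero_iff, ModuleCat.isZero_iff_subsingleton]
  rw [h1]
  cases i with
  | zero =>
    obtain ⟨p, hp, hpe, hpd⟩ : ∃ p : P.complex.X 0 ⟶ X, P.complex.d 1 0 ≫ p = 0 ∧ Epi p ∧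
        ∀ x : P.complex.X 0 ⟶ Y, P.complex.d 1 0 ≫ x = 0 → ∃ g, p ≫ g = x := by
      refine ⟨P.π.f 0, P.complex_d_comp_π_f_zero,
        (inferInstance : Epi (P.π.f 0)), fun x hx => ?_⟩
      exact ⟨_, P.exact₀.g_desc x hx⟩
    rw [HomologicalComplex.exactAt_iff' _ 0 0 1 (by simp) (by simp),
      ShortComplex.moduleCat_exact_iff]
    constructor
    · intro h
      refine ⟨fun a b => ?_⟩
      have key : ∀ a : Abelian.Ext X Y 0, a = 0 := by
        intro a
        obtain ⟨g, rfl⟩ := (Abelian.Ext.addEquiv₀ (X := X) (Y := Y)).symm.surjective a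
        obtain ⟨y, hy⟩ := h (p ≫ g : P.complex.X 0 ⟶ Y) (by
          change P.complex.d 1 0 ≫ (p ≫ g) = 0
          rw [← Category.assoc, hp]
          simp)
        have hy2 : P.complex.d 0 0 ≫ (show P.complex.X 0 ⟶ Y from y) = p ≫ g := hy
        rw [P.complex.shape 0 0 (by simp), Limits.zero_comp] at hy2
        have hg : g = 0 := by
          rw [← cancel_epi (p), ← hy2, Limits.comp_zero]
        rw [hg, map_zero]
      rw [key a, key b]
    · intro h x hx
      refine ⟨0, ?_⟩
      rw [map_zero]
      have hx' : P.complex.d 1 0 ≫ (show P.complex.X 0 ⟶ Y from x) = 0 := hx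
      obtain ⟨g, hg⟩ : ∃ g, p ≫ g = (show P.complex.X 0 ⟶ Y from x) :=
        hpd _ hx'
      have hs : Subsingleton (X ⟶ Y) :=
        (Abelian.Ext.addEquiv₀ (X := X) (Y := Y)).symm.toEquiv.subsingleton
      have hg0 : g = (0 : X ⟶ Y) := Subsingleton.elim _ _
      have : (show P.complex.X 0 ⟶ Y from x) = 0 := by
        rw [← hg, hg0]; exact Limits.comp_zero
      exact this.symm
  | succ j =>
    rw [HomologicalComplex.exactAt_iff' _ j (j+1) (j+2) (by simp) (by simp),
      ShortComplex.moduleCat_exact_iff]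
    constructor
    · intro h
      have key : ∀ a : Abelian.Ext X Y (j+1), a = 0 := by
        intro a
        obtain ⟨f, hf, rfl⟩ := P.extMk_surjective a (j+2) rfl
        rw [P.extMk_eq_zero_iff f (j+2) rfl hf j rfl]
        exact h f hf
      exact ⟨fun a b => by rw [key a, key b]⟩
    · intro h f hf
      exact (P.extMk_eq_zero_iff f (j+2) rfl hf j rfl).1 (Subsingleton.elim _ _)

section LES
variable {R : Type} [CommRing R] (K : ModuleCat.{0} R) {S : ShortComplex (ModuleCat.{0} R)}


theorem depth_left (hS : S.ShortExact) (m : ℕ)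
    (hB : ∀ i < m + 1, Subsingleton (Abelian.Ext K S.X₂ i))
    (hC : ∀ i < m, Subsingleton (Abelian.Ext K S.X₃ i)) :
    ∀ i < m + 1, Subsingleton (Abelian.Ext K S.X₁ i) := by
  intro i hi
  have hb := hB i hi
  have key : ∀ a : Abelian.Ext K S.X₁ i, a = 0 := by
    intro a
    cases i with
    | zero =>
      have := hS.mono_f
      apply Abelian.Ext.postcomp_mk₀_injective_of_mono K S.f
      exact Subsingleton.elim _ _
    | succ i =>
      have := hC i (by omega)
      obtain ⟨x, rfl⟩ := Abelian.Ext.covariant_sequence_exact₁ K hS a (Subsingleton.elim _ _) rfl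
      rw [Subsingleton.elim x 0, Abelian.Ext.zero_comp]
  exact ⟨fun a b => by rw [key a, key b]⟩

theorem depth_right (hS : S.ShortExact) (m : ℕ)
    (hB : ∀ i < m, Subsingleton (Abelian.Ext K S.X₂ i))
    (hA : ∀ i < m + 1, Subsingleton (Abelian.Ext K S.X₁ i)) :
    ∀ i < m, Subsingleton (Abelian.Ext K S.X₃ i) := by
  intro i hi
  have hb := hB i hi
  have ha := hA (i+1) (by omega)
  have key : ∀ a : Abelian.Ext K S.X₃ i, a = 0 := by
    intro a
    obtain ⟨x, rfl⟩ := Abelian.Ext.covariant_sequence_exact₃ K hS a rfl (Subsingleton.elim _ _)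
    rw [Subsingleton.elim x 0, Abelian.Ext.zero_comp]
  exact ⟨fun a b => by rw [key a, key b]⟩

theorem depth_mid (hS : S.ShortExact) (m : ℕ)
    (hA : ∀ i < m, Subsingleton (Abelian.Ext K S.X₁ i))
    (hC : ∀ i < m, Subsingleton (Abelian.Ext K S.X₃ i)) :
    ∀ i < m, Subsingleton (Abelian.Ext K S.X₂ i) := by
  intro i hi
  have ha := hA i hi
  have hc := hC i hi
  have key : ∀ a : Abelian.Ext K S.X₂ i, a = 0 := by
    intro a
    obtain ⟨x, rfl⟩ := Abelian.Ext.covariant_sequence_exact₂ K hS a (Subsingleton.elim _ _)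
    rw [Subsingleton.elim x 0, Abelian.Ext.zero_comp]
  exact ⟨fun a b => by rw [key a, key b]⟩
end LES

open RingTheory.Sequence IsLocalRing Pointwise in
theorem rees_local {R : Type} [CommRing R] [IsLocalRing R] [IsNoetherianRing R] (n : ℕ)
    (M : Type) [AddCommGroup M] [Module R M] [Module.Finite R M] [Nontrivial M] :
    (∀ i < n, Subsingleton (Abelian.Ext (ModuleCat.of R (ResidueField R))
      (ModuleCat.of R M) i)) ↔
    ∃ rs : List R, rs.length = n ∧ (∀ r ∈ rs, r ∈ maximalIdeal R) ∧ IsRegular M rs := by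
  have hlt : maximalIdeal R • (⊤ : Submodule R M) < ⊤ := by
    refine lt_top_iff_ne_top.2 fun h => ?_
    have := Submodule.eq_bot_of_le_smul_of_le_jacobson_bot (maximalIdeal R) (⊤ : Submodule R M)
      Module.Finite.fg_top h.ge (IsLocalRing.maximalIdeal_le_jacobson _)
    exact top_ne_bot this
  have hsupp : Module.support R (ResidueField R) =
      PrimeSpectrum.zeroLocus (maximalIdeal R : Set R) := by
    have : Module.support R (R ⧸ maximalIdeal R) =
      PrimeSpectrum.zeroLocus (maximalIdeal R : Set R) := by
      rw [Module.support_eq_zeroLocus, Ideal.annihilator_quotient]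
    exact this
  have fin : Module.Finite R (ResidueField R) :=
    inferInstanceAs (Module.Finite R (R ⧸ maximalIdeal R))
  have T := ModuleCat.exists_isRegular_tfae (maximalIdeal R) n (ModuleCat.of R M) hlt
  constructor
  · intro h
    have T' := T.out 2 3
    exact T'.1 ⟨ModuleCat.of R (ResidueField R),
      inferInstanceAs (Nontrivial (ResidueField R)), fin, hsupp, h⟩
  · intro h
    have T' := T.out 3 0
    exact T'.1 h (ModuleCat.of R (ResidueField R))
      (inferInstanceAs (Nontrivial (ResidueField R))) fin hsupp.le

/-- A regular element outside `m²`. -/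
theorem exists_reg_not_mem_sq {R : Type} [CommRing R] [IsLocalRing R] [IsNoetherianRing R]
    (M : Type) [AddCommGroup M] [Module R M] [Module.Finite R M]
    (hm : ¬ IsLocalRing.maximalIdeal R ≤ IsLocalRing.maximalIdeal R ^ 2)
    (r : R) (hr : r ∈ IsLocalRing.maximalIdeal R) (hreg : IsSMulRegular M r) :
    ∃ x ∈ IsLocalRing.maximalIdeal R, x ∉ IsLocalRing.maximalIdeal R ^ 2 ∧
      IsSMulRegular M x := by
  by_contra hcon
  push Not at hcon
  classical
  have hfin := associatedPrimes.finite R M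
  have hz := biUnion_associatedPrimes_eq_zero_divisors R M
  have hsub : (IsLocalRing.maximalIdeal R : Set R) ⊆
      ⋃ i ∈ ((insert (IsLocalRing.maximalIdeal R ^ 2) hfin.toFinset : Finset (Ideal R)) :
        Set (Ideal R)), ((id i : Ideal R) : Set R) := by
    intro x hx
    by_cases hx2 : x ∈ IsLocalRing.maximalIdeal R ^ 2
    · simp only [Set.mem_iUnion]
      exact ⟨_, by simp, hx2⟩
    · have h := hcon x hx hx2
      have : x ∈ ⋃ p ∈ associatedPrimes R M, (p : Set R) := by
        rw [hz]
        rw [isSMulRegular_iff_right_eq_zero_of_smul] at h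
        push Not at h
        obtain ⟨y, h1, h2⟩ := h
        exact ⟨y, h2, h1⟩
      simp only [Set.mem_iUnion] at this ⊢
      obtain ⟨p, hp, hxp⟩ := this
      exact ⟨p, by simp [hp], hxp⟩
  rw [Ideal.subset_union_prime (IsLocalRing.maximalIdeal R ^ 2)
    (IsLocalRing.maximalIdeal R ^ 2)] at hsub
  · obtain ⟨p, hp, hle⟩ := hsub
    simp only [Finset.mem_insert, Set.Finite.mem_toFinset] at hp
    rcases hp with rfl | hp
    · exact hm hle
    · have : r ∈ ⋃ p ∈ associatedPrimes R M, (p : Set R) := by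
        simp only [Set.mem_iUnion]
        exact ⟨p, hp, hle hr⟩
      rw [hz] at this
      obtain ⟨y, hy, h0⟩ := this
      exact hy (hreg.right_eq_zero_of_smul h0)
  · intro p hp hpa _
    simp only [Finset.mem_insert, Set.Finite.mem_toFinset] at hp
    rcases hp with rfl | hp
    · exact absurd rfl hpa
    · exact IsAssociatedPrime.isPrime hp

/-- Removing one generator modulo an element outside `m²`. -/
theorem gens_quot {R : Type} [CommRing R] [IsLocalRing R] {n : ℕ}
    (g : Fin (n + 1) → R) (hg : Ideal.span (Set.range g) = IsLocalRing.maximalIdeal R)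
    (x : R) (hx : x ∈ IsLocalRing.maximalIdeal R) (hx2 : x ∉ IsLocalRing.maximalIdeal R ^ 2)
    [IsLocalRing (R ⧸ Ideal.span {x})] :
    ∃ g' : Fin n → R ⧸ Ideal.span {x},
      Ideal.span (Set.range g') = IsLocalRing.maximalIdeal (R ⧸ Ideal.span {x}) := by
  have hgm : ∀ i, g i ∈ IsLocalRing.maximalIdeal R := fun i => by
    rw [← hg]; exact Ideal.subset_span ⟨i, rfl⟩
  have hxs := hx
  rw [← hg, Ideal.mem_span_range_iff_exists_fun] at hxs
  obtain ⟨c, hc⟩ := hxs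
  obtain ⟨i, hi⟩ : ∃ i, IsUnit (c i) := by
    by_contra hcon
    push Not at hcon
    apply hx2
    rw [← hc, pow_two]
    exact Ideal.sum_mem _ fun i _ => Ideal.mul_mem_mul
      ((IsLocalRing.mem_maximalIdeal _).2 (hcon i)) (hgm i)
  let π := Ideal.Quotient.mk (Ideal.span {x})
  refine ⟨fun j => π (g (i.succAbove j)), ?_⟩
  have hmap : IsLocalRing.maximalIdeal (R ⧸ Ideal.span {x}) =
      (IsLocalRing.maximalIdeal R).map π := by
    exact (IsLocalRing.map_maximalIdeal_of_surjective π Ideal.Quotient.mk_surjective).symm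
  rw [hmap, ← hg, Ideal.map_span]
  apply le_antisymm
  · apply Ideal.span_mono
    rintro _ ⟨j, rfl⟩
    exact ⟨_, ⟨_, rfl⟩, rfl⟩
  · rw [Ideal.span_le]
    rintro _ ⟨_, ⟨j, rfl⟩, rfl⟩
    by_cases hj : j = i
    · subst hj
      have h0 : π (∑ k, c k * g k) = 0 := by
        rw [hc]; exact Ideal.Quotient.eq_zero_iff_mem.2 (Ideal.mem_span_singleton_self x)
      rw [Fin.sum_univ_succAbove _ j, map_add, map_mul, map_sum] at h0
      have hu : IsUnit (π (c j)) := hi.map π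
      rw [SetLike.mem_coe, ← Ideal.unit_mul_mem_iff_mem _ hu, eq_neg_of_add_eq_zero_left h0]
      apply neg_mem
      apply sum_mem
      intro k _
      rw [map_mul]
      exact Ideal.mul_mem_left _ _ (Ideal.subset_span ⟨k, rfl⟩)
    · obtain ⟨k, rfl⟩ := Fin.exists_succAbove_eq hj
      exact Ideal.subset_span ⟨k, rfl⟩

open RingTheory.Sequence IsLocalRing Pointwise in
theorem free_of_regular (n : ℕ) : ∀ (R : Type) [CommRing R] [IsLocalRing R] [IsNoetherianRing R]
    (M : Type) [AddCommGroup M] [Module R M] [Module.Finite R M]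
    (g : Fin n → R) (_ : Ideal.span (Set.range g) = maximalIdeal R)
    (rs : List R) (_ : rs.length = n) (_ : ∀ r ∈ rs, r ∈ maximalIdeal R) (_ : IsRegular M rs),
    Module.Free R M := by
  induction n with
  | zero =>
    intro R _ _ _ M _ _ _ g hg rs _ _ _
    have : maximalIdeal R = ⊥ := by rw [← hg]; simp
    let _ := (IsLocalRing.isField_iff_maximalIdeal_eq.2 this).toField
    infer_instance
  | succ n ih =>
    intro R _ _ _ M _ _ _ g hg rs hlen hmem hreg
    by_cases hm : maximalIdeal R ≤ maximalIdeal R ^ 2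
    · have : maximalIdeal R = ⊥ := by
        apply Submodule.eq_bot_of_le_smul_of_le_jacobson_bot (maximalIdeal R) _
          (IsNoetherian.noetherian _) _ (IsLocalRing.maximalIdeal_le_jacobson _)
        rwa [smul_eq_mul, ← pow_two]
      let _ := (IsLocalRing.isField_iff_maximalIdeal_eq.2 this).toField
      infer_instance
    have hnt : Nontrivial M := hreg.nontrivial
    have hext := (rees_local (n + 1) M).2 ⟨rs, hlen, hmem, hreg⟩
    obtain ⟨r, rs', rfl⟩ : ∃ r rs', rs = r :: rs' := by
      cases rs with
      | nil => simp at hlen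
      | cons a b => exact ⟨a, b, rfl⟩
    rw [isRegular_cons_iff] at hreg
    obtain ⟨x, hxm, hx2, hxr⟩ := exists_reg_not_mem_sq M hm r (hmem r (by simp)) hreg.1
    have hnq : Nontrivial (QuotSMulTop x M) :=
      nontrivial_quotSMulTop_of_mem_maximalIdeal M hxm
    have hextq := depth_right (ModuleCat.of R (ResidueField R))
      (hxr.smulShortComplex_shortExact (M := ModuleCat.of R M)) n (fun i hi => hext i (by omega)) hext
    obtain ⟨qs, hql, hqm, hqr⟩ := (rees_local n (QuotSMulTop x M)).1 hextq
    have hnR : Nontrivial (R ⧸ Ideal.span {x}) := by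
      rw [Ideal.Quotient.nontrivial_iff]
      exact fun h => (Ideal.span_singleton_eq_top.1 h |> (IsLocalRing.mem_maximalIdeal _).1 hxm)
    have hloc : IsLocalRing (R ⧸ Ideal.span {x}) :=
      IsLocalRing.of_surjective' (Ideal.Quotient.mk (Ideal.span {x})) Ideal.Quotient.mk_surjective
    obtain ⟨g', hg'⟩ := gens_quot g hg x hxm hx2
    have hfin : Module.Finite (R ⧸ Ideal.span {x}) (QuotSMulTop x M) :=
      Module.Finite.of_restrictScalars_finite R _ _
    have hfree : Module.Free (R ⧸ Ideal.span {x}) (QuotSMulTop x M) := by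
      have hmm : ∀ r ∈ qs.map (algebraMap R (R ⧸ Ideal.span {x})),
          r ∈ maximalIdeal (R ⧸ Ideal.span {x}) := by
        intro r hr
        rw [List.mem_map] at hr
        obtain ⟨q, hq, rfl⟩ := hr
        have := hqm q hq
        rw [IsLocalRing.mem_maximalIdeal, mem_nonunits_iff] at this ⊢
        have hl : IsLocalHom (algebraMap R (R ⧸ Ideal.span {x})) :=
          IsLocalHom.of_surjective _ Ideal.Quotient.mk_surjective
        rwa [isUnit_map_iff]
      refine ih _ _ g' hg' (qs.map (algebraMap R (R ⧸ Ideal.span {x}))) (by simpa) hmm ?_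
      rw [IsLocalRing.isRegular_iff_isWeaklyRegular_of_subset_maximalIdeal hmm,
        isWeaklyRegular_map_algebraMap_iff]
      exact hqr.toIsWeaklyRegular
    have hfp : Module.FinitePresentation R M := Module.finitePresentation_of_finite R M
    exact (Module.free_quotSMulTop_iff_free R M (IsLocalRing.maximalIdeal_le_jacobson _ hxm) hxr).1 hfree

open IsLocalRing in
theorem free_of_depth {n : ℕ} {R : Type} [CommRing R] [IsLocalRing R] [IsNoetherianRing R]
    (M : Type) [AddCommGroup M] [Module R M] [Module.Finite R M]
    (g : Fin n → R) (hg : Ideal.span (Set.range g) = maximalIdeal R)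
    (h : ∀ i < n, Subsingleton (Abelian.Ext (ModuleCat.of R (ResidueField R))
      (ModuleCat.of R M) i)) : Module.Free R M := by
  rcases subsingleton_or_nontrivial M with hM | hM
  · infer_instance
  obtain ⟨rs, h1, h2, h3⟩ := (rees_local n M).1 h
  exact free_of_regular n R M g hg rs h1 h2 h3

section PS
open MvPowerSeries

variable {n : ℕ}

theorem ps_isUnit_iff (g : MvPowerSeries (Fin n) ℂ) : IsUnit g ↔ constantCoeff g ≠ 0 := by
  rw [MvPowerSeries.isUnit_iff_constantCoeff, isUnit_iff_ne_zero]

theorem coeff_euler (f : MvPowerSeries (Fin n) ℂ) (e : Fin n →₀ ℕ) :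
    coeff e (∑ i, X i * pderiv ℂ i f) = (e.degree : ℂ) * coeff e f := by
  rw [map_sum, Finsupp.degree_eq_sum, Nat.cast_sum, Finset.sum_mul]
  refine Finset.sum_congr rfl fun i _ => ?_
  by_cases hi : e i = 0
  · rw [hi, Nat.cast_zero, zero_mul]
    exact (MvPowerSeries.X_dvd_iff.1 (Dvd.intro _ rfl)) e hi
  · obtain ⟨e', rfl⟩ : ∃ e', e = Finsupp.single i 1 + e' := by
      refine ⟨e - Finsupp.single i 1, ?_⟩
      ext j
      by_cases hj : i = j
      · subst hj; simp; omega
      · simp [hj]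
    rw [X, coeff_add_monomial_mul, one_mul, coeff_pderiv, add_comm e']
    simp [add_comm]
    ring

theorem order_euler (f : MvPowerSeries (Fin n) ℂ) (d : ℕ) (hd : f.order = d) :
    ((d + 1 : ℕ) : ℕ∞) ≤ (∑ i, X i * pderiv ℂ i f - C (d : ℂ) * f).order := by
  apply MvPowerSeries.nat_le_order
  intro e he
  rw [map_sub, coeff_euler, coeff_C_mul, ← sub_mul]
  rcases Nat.lt_succ_iff_lt_or_eq.1 he with h | h
  · rw [coeff_of_lt_order (by rw [hd]; exact_mod_cast h), mul_zero]
  · rw [h, sub_self, zero_mul]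

theorem cc_pderiv_sum (w : Fin n → MvPowerSeries (Fin n) ℂ) (i : Fin n) :
    constantCoeff (pderiv ℂ i (∑ j, X j * w j)) = constantCoeff (w i) := by
  classical
  rw [map_sum, map_sum, Finset.sum_eq_single i]
  · simp [Derivation.leibniz, pderiv_X_self]
  · intro j _ hj
    simp [Derivation.leibniz, pderiv_X_of_ne hj]
  · simp

theorem order_le_one (q : MvPowerSeries (Fin n) ℂ) (i : Fin n)
    (h : constantCoeff (pderiv ℂ i q) ≠ 0) : q.order ≤ 1 := by
  have : coeff (Finsupp.single i 1) q ≠ 0 := by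
    rw [← coeff_zero_eq_constantCoeff_apply, coeff_pderiv] at h
    intro h0
    apply h
    simp [h0]
  have := MvPowerSeries.order_le this
  simpa using this

theorem jac_not_principal (f : MvPowerSeries (Fin n) ℂ) (hf0 : f ≠ 0) (hfu : ¬ IsUnit f)
    (hsq : Squarefree f) (g : MvPowerSeries (Fin n) ℂ) (hgu : ¬ IsUnit g)
    (hgf : g ∣ f) (hgd : ∀ i, g ∣ pderiv ℂ i f)
    (hg : ∃ (a : MvPowerSeries (Fin n) ℂ) (b : Fin n → MvPowerSeries (Fin n) ℂ),
      g = a * f + ∑ i, b i * pderiv ℂ i f) : False := by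
  obtain ⟨h, hh⟩ := hgf
  choose u hu using hgd
  obtain ⟨a, b, hab⟩ := hg
  have hg0 : g ≠ 0 := by rintro rfl; simp at hh; exact hf0 hh
  have hone : 1 = a * h + ∑ i, b i * u i := by
    apply mul_left_cancel₀ hg0
    rw [mul_one, mul_add, Finset.mul_sum]
    nth_rewrite 1 [hab]
    congr 1
    · rw [hh]; ring
    · exact Finset.sum_congr rfl fun i _ => by rw [hu i]; ring
  obtain ⟨d, hd⟩ : ∃ d : ℕ, f.order = d := by
    refine ⟨f.order.toNat, ?_⟩
    exact (ne_zero_iff_order_finite.1 hf0).symm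
  have hfc : constantCoeff f = 0 := by
    by_contra hc
    exact hfu ((ps_isUnit_iff f).2 hc)
  have hd1 : d ≠ 0 := by
    rintro rfl
    exact (order_ne_zero_iff_constCoeff_eq_zero.2 hfc) hd
  have hE := order_euler f d hd
  by_cases hhu : IsUnit h
  · -- `f ∣ ∂ᵢ f` for all `i`
    obtain ⟨h', hh'⟩ := hhu.exists_right_inv
    have hc : ∀ i, pderiv ℂ i f = f * (h' * u i) := fun i => by
      rw [hu i, hh]
      calc g * u i = g * (h * h') * u i := by rw [hh', mul_one]
        _ = _ := by ring
    have heq : ∑ i, X i * pderiv ℂ i f - C (d : ℂ) * f =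
        f * (∑ i, X i * (h' * u i) - C (d : ℂ)) := by
      rw [mul_sub, Finset.mul_sum]
      congr 1
      · exact Finset.sum_congr rfl fun i _ => by rw [hc i]; ring
      · ring
    rw [heq, order_mul, hd] at hE
    have h0 : (∑ i, X i * (h' * u i) - C (d : ℂ)).order = 0 := by
      by_contra hne
      have := order_ne_zero_iff_constCoeff_eq_zero.1 hne
      simp [hd1] at this
    rw [h0, add_zero] at hE
    have : d + 1 ≤ d := by exact_mod_cast hE
    omega
  · have hhc : constantCoeff h = 0 := by
      by_contra hc
      exact hhu ((ps_isUnit_iff h).2 hc)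
    obtain ⟨i, hi⟩ : ∃ i, IsUnit (u i) := by
      by_contra hcon
      push Not at hcon
      have h1 := congrArg constantCoeff hone
      rw [map_one, map_add, map_mul, hhc, mul_zero, zero_add, map_sum] at h1
      rw [Finset.sum_eq_zero] at h1
      · exact one_ne_zero h1
      · intro i _
        have : constantCoeff (u i) = 0 := by
          by_contra hc
          exact hcon i ((ps_isUnit_iff _).2 hc)
        rw [map_mul, this, mul_zero]
    obtain ⟨t, ht⟩ := hi.exists_right_inv
    set p := pderiv ℂ i f with hp
    have hgp : g = p * t := by rw [hp, hu i, mul_assoc, ht, mul_one]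
    have hfp : f = p * (t * h) := by rw [← mul_assoc, ← hgp]; exact hh
    set k := t * h with hk
    have hkc : constantCoeff k = 0 := by rw [hk, map_mul, hhc, mul_zero]
    have hp0 : p ≠ 0 := by intro h0; rw [h0, zero_mul] at hfp; exact hf0 hfp
    have hk0 : k ≠ 0 := by intro h0; rw [h0, mul_zero] at hfp; exact hf0 hfp
    have hw : ∀ j, pderiv ℂ j f = p * (t * u j) := fun j => by
      rw [← mul_assoc, ← hgp]; exact hu j
    obtain ⟨op, hop⟩ : ∃ d : ℕ, p.order = d := ⟨_, (ne_zero_iff_order_finite.1 hp0).symm⟩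
    obtain ⟨ok, hok⟩ : ∃ d : ℕ, k.order = d := ⟨_, (ne_zero_iff_order_finite.1 hk0).symm⟩
    have hok1 : ok ≠ 0 := by
      rintro rfl
      exact (order_ne_zero_iff_constCoeff_eq_zero.2 hkc) hok
    have hsum : op + ok = d := by
      have := order_mul p k
      rw [← hfp, hd, hop, hok] at this
      exact_mod_cast this.symm
    have heq : ∑ j, X j * pderiv ℂ j f - C (d : ℂ) * f =
        p * (∑ j, X j * (t * u j) - C (d : ℂ) * k) := by
      rw [mul_sub, Finset.mul_sum]
      congr 1
      · exact Finset.sum_congr rfl fun j _ => by rw [hw j]; ring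
      · nth_rewrite 1 [hfp]; ring
    rw [heq, order_mul, hop] at hE
    have hcc : constantCoeff (pderiv ℂ i (∑ j, X j * (t * u j) - C (d : ℂ) * k)) = 0 := by
      by_contra hne
      have h1 := order_le_one _ i hne
      have h2 : ((d + 1 : ℕ) : ℕ∞) ≤ (op : ℕ∞) + 1 := hE.trans (by gcongr)
      have h3 : d + 1 ≤ op + 1 := by exact_mod_cast h2
      omega
    have hcc2 : 1 = (d : ℂ) * constantCoeff (pderiv ℂ i k) := by
      rw [map_sub, map_sub, cc_pderiv_sum, mul_comm t, ht, map_one, sub_eq_zero] at hcc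
      rw [hcc]
      simp [Derivation.leibniz]
    by_cases hd2 : d = 1
    · have : op = 0 := by omega
      have hpu : IsUnit p := by
        rw [ps_isUnit_iff]
        intro h0
        apply order_ne_zero_iff_constCoeff_eq_zero.2 h0
        rw [hop, this]; rfl
      rw [hp, hu i] at hpu
      exact hgu (isUnit_of_mul_isUnit_left hpu)
    · have hrel : p * (1 - pderiv ℂ i k) = k * pderiv ℂ i p := by
        have h1 : p = p * pderiv ℂ i k + k * pderiv ℂ i p := by
          have h2 := congrArg (pderiv ℂ i) hfp
          rw [← hp, Derivation.leibniz] at h2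
          simpa using h2
        linear_combination h1
      have hun : IsUnit (1 - pderiv ℂ i k) := by
        rw [ps_isUnit_iff, map_sub, map_one]
        intro h0
        rw [sub_eq_zero] at h0
        rw [← h0, mul_one] at hcc2
        exact hd2 (by exact_mod_cast hcc2.symm)
      have hdvd : k ∣ p := by
        rw [← hun.dvd_mul_right, hrel]
        exact Dvd.intro _ rfl
      have hsq2 : k * k ∣ f := by
        rw [hfp]
        exact mul_dvd_mul_right hdvd k
      have := hsq k hsq2
      rw [ps_isUnit_iff] at this
      exact this hkc
end PS

section PS2
open MvPowerSeries IsLocalRing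

variable {n : ℕ}

theorem mem_span_X (S : Finset (Fin n)) : ∀ (g : MvPowerSeries (Fin n) ℂ),
    g ∈ Ideal.span ((X : Fin n → MvPowerSeries (Fin n) ℂ) '' (S : Set (Fin n))) ↔
      ∀ d : Fin n →₀ ℕ, (∀ j ∈ S, d j = 0) → coeff d g = 0 := by
  classical
  induction S using Finset.induction_on with
  | empty =>
    intro g
    simp [MvPowerSeries.ext_iff]
  | insert j S hj ih =>
    intro g
    rw [Finset.coe_insert, Set.image_insert_eq, Ideal.mem_span_insert]
    constructor
    · rintro ⟨a, z, hz, rfl⟩ d hd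
      rw [map_add, (ih z).1 hz d (fun k hk => hd k (Finset.mem_insert_of_mem hk)), add_zero]
      exact MvPowerSeries.X_dvd_iff.1 (Dvd.intro_left a rfl) d (hd j (Finset.mem_insert_self _ _))
    · intro h
      let r : MvPowerSeries (Fin n) ℂ := fun d => if d j = 0 then coeff d g else 0
      have hr : ∀ d, coeff d r = if d j = 0 then coeff d g else 0 := fun d => rfl
      obtain ⟨a, ha⟩ : X j ∣ g - r := by
        rw [MvPowerSeries.X_dvd_iff]
        intro d hd
        rw [map_sub, hr, if_pos hd, sub_self]
      refine ⟨a, r, (ih r).2 ?_, ?_⟩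
      · intro d hd
        rw [hr]
        split_ifs with h0
        · refine h d fun k hk => ?_
          rcases Finset.mem_insert.1 hk with rfl | hk
          · exact h0
          · exact hd k hk
        · rfl
      · rw [mul_comm, ← ha]; ring

theorem span_X_eq : Ideal.span (Set.range (X : Fin n → MvPowerSeries (Fin n) ℂ)) =
    maximalIdeal (MvPowerSeries (Fin n) ℂ) := by
  ext g
  have := mem_span_X (Finset.univ : Finset (Fin n)) g
  rw [Finset.coe_univ, Set.image_univ] at this
  rw [this, IsLocalRing.mem_maximalIdeal, mem_nonunits_iff, ps_isUnit_iff, not_not]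
  constructor
  · intro h
    rw [← coeff_zero_eq_constantCoeff_apply]
    exact h 0 (by simp)
  · intro h d hd
    have : d = 0 := by ext j; exact hd j (Finset.mem_univ _)
    rw [this, coeff_zero_eq_constantCoeff_apply, h]

open RingTheory.Sequence in
theorem X_regular : IsRegular (MvPowerSeries (Fin n) ℂ)
    (List.ofFn (X : Fin n → MvPowerSeries (Fin n) ℂ)) := by
  rw [IsLocalRing.isRegular_iff_isWeaklyRegular_of_subset_maximalIdeal]
  · refine ⟨fun i hi => ?_⟩
    rw [List.length_ofFn] at hi
    rw [isSMulRegular_quotient_iff_mem_of_smul_mem]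
    have hI : Ideal.ofList ((List.ofFn (X : Fin n → MvPowerSeries (Fin n) ℂ)).take i) =
        Ideal.span ((X : Fin n → MvPowerSeries (Fin n) ℂ) ''
          ((Finset.univ.filter fun j : Fin n => (j : ℕ) < i : Finset (Fin n)) : Set (Fin n))) := by
      unfold Ideal.ofList
      congr 1
      ext r
      simp only [Set.mem_ofPred_eq, List.mem_take_iff_getElem, List.getElem_ofFn, Set.mem_image,
        Finset.coe_filter, Finset.mem_univ, true_and]
      constructor
      · rintro ⟨j, hj, rfl⟩
        exact ⟨⟨j, _⟩, by simp at hj ⊢; omega, rfl⟩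
      · rintro ⟨j, hj, rfl⟩
        exact ⟨j, by simp; omega, rfl⟩
    intro y hy
    rw [hI, smul_eq_mul, Ideal.mul_top, mem_span_X] at hy ⊢
    intro d hd
    have := hy (Finsupp.single ⟨i, hi⟩ 1 + d) (by
      intro j hj
      simp only [Finset.mem_filter, Finset.mem_univ, true_and] at hj
      have h1 := hd j (by simpa using hj)
      rw [Finsupp.add_apply, h1, Finsupp.single_apply, if_neg]
      rintro rfl
      simp at hj)
    rw [List.getElem_ofFn, smul_eq_mul, X, coeff_add_monomial_mul, one_mul] at this
    exact this
  · intro r hr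
    rw [List.mem_ofFn] at hr
    obtain ⟨i, rfl⟩ := hr
    rw [← span_X_eq]
    exact Ideal.subset_span ⟨i, rfl⟩

theorem der_zero_of_X (θ : Derivation ℂ (MvPowerSeries (Fin n) ℂ) (MvPowerSeries (Fin n) ℂ))
    (h : ∀ i, θ (X i) = 0) : θ = 0 := by
  have key : ∀ N : ℕ, ∀ g, θ g ∈ maximalIdeal (MvPowerSeries (Fin n) ℂ) ^ N := by
    intro N
    induction N with
    | zero => intro g; simp
    | succ N ih =>
      intro g
      have hm : g - C (constantCoeff g) ∈
          Ideal.span (Set.range (X : Fin n → MvPowerSeries (Fin n) ℂ)) := by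
        rw [span_X_eq, IsLocalRing.mem_maximalIdeal, mem_nonunits_iff, ps_isUnit_iff]
        simp
      rw [Ideal.mem_span_range_iff_exists_fun] at hm
      obtain ⟨c, hc⟩ := hm
      have hC : θ (C (constantCoeff g)) = 0 := θ.map_algebraMap (constantCoeff g)
      have : θ g = ∑ i, X i * θ (c i) := by
        have h1 := congrArg θ hc
        rw [map_sub, hC, sub_zero, map_sum] at h1
        rw [← h1]
        refine Finset.sum_congr rfl fun i _ => ?_
        rw [Derivation.leibniz, h i, smul_zero, zero_add, smul_eq_mul]
      rw [this, pow_succ']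
      refine sum_mem fun i _ => Ideal.mul_mem_mul ?_ (ih _)
      rw [← span_X_eq]
      exact Ideal.subset_span ⟨i, rfl⟩
  ext g : 1
  have hb := Ideal.iInf_pow_eq_bot_of_isLocalRing (maximalIdeal (MvPowerSeries (Fin n) ℂ))
    (Ideal.IsPrime.ne_top inferInstance)
  have : θ g ∈ ⨅ i, maximalIdeal (MvPowerSeries (Fin n) ℂ) ^ i := by
    rw [Submodule.mem_iInf]
    exact fun N => key N g
  rw [hb] at this
  simpa using this

theorem der_eq (θ : Derivation ℂ (MvPowerSeries (Fin n) ℂ) (MvPowerSeries (Fin n) ℂ)) :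
    θ = ∑ i, θ (X i) • pderiv ℂ i := by
  classical
  rw [← sub_eq_zero]
  apply der_zero_of_X
  intro j
  rw [Derivation.sub_apply, ← Derivation.coeFnAddMonoidHom_apply (∑ i, _), map_sum,
    Finset.sum_apply, Finset.sum_eq_single j]
  · simp
  · intro i _ hi
    simp [pderiv_X_of_ne hi.symm]
  · simp

/-- Coordinates of a derivation. -/
noncomputable def derEquiv : Derivation ℂ (MvPowerSeries (Fin n) ℂ) (MvPowerSeries (Fin n) ℂ)
    ≃ₗ[MvPowerSeries (Fin n) ℂ] (Fin n → MvPowerSeries (Fin n) ℂ) :=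
  LinearEquiv.ofBijective
    { toFun := fun θ i => θ (X i)
      map_add' := fun _ _ => rfl
      map_smul' := fun _ _ => rfl } (by
    classical
    constructor
    · rw [← LinearMap.ker_eq_bot, LinearMap.ker_eq_bot']
      intro θ h
      exact der_zero_of_X θ fun i => congrFun h i
    · intro u
      refine ⟨∑ i, u i • pderiv ℂ i, ?_⟩
      funext j
      change (∑ i, u i • pderiv ℂ i : Derivation ℂ _ _) (X j) = u j
      rw [← Derivation.coeFnAddMonoidHom_apply (∑ i, _), map_sum,
        Finset.sum_apply, Finset.sum_eq_single j]
      · simp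
      · intro i _ hi
        simp [pderiv_X_of_ne hi.symm]
      · simp)
end PS2

theorem ext_subsingleton_of_subsingleton {R : Type} [CommRing R] (K : ModuleCat.{0} R)
    (M : Type) [AddCommGroup M] [Module R M] [Subsingleton M] (i : ℕ) :
    Subsingleton (Abelian.Ext K (ModuleCat.of R M) i) := by
  have key : ∀ a : Abelian.Ext K (ModuleCat.of R M) i, a = 0 := by
    intro a
    have h : 𝟙 (ModuleCat.of R M) = 0 := by
      ext x
      exact Subsingleton.elim (α := M) _ _
    rw [← a.comp_mk₀_id, h, Abelian.Ext.mk₀_zero, Abelian.Ext.comp_zero]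
  exact ⟨fun a b => by rw [key a, key b]⟩

/-- A short exact sequence of modules from linear maps. -/
theorem ses_of {R : Type} [CommRing R] {A B C : Type} [AddCommGroup A] [AddCommGroup B]
    [AddCommGroup C] [Module R A] [Module R B] [Module R C] (f : A →ₗ[R] B) (g : B →ₗ[R] C)
    (hf : Function.Injective f) (hg : Function.Surjective g) (hfg : Function.Exact f g) :
    (ShortComplex.mk (ModuleCat.ofHom f) (ModuleCat.ofHom g) (by
      ext x
      exact (hfg (f x)).2 ⟨x, rfl⟩)).ShortExact where
  exact := by
    rw [ShortComplex.moduleCat_exact_iff]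
    intro x hx
    exact (hfg x).1 hx
  mono_f := (ModuleCat.mono_iff_injective _).2 hf
  epi_g := (ModuleCat.epi_iff_surjective _).2 hg

theorem ext_pi {R : Type} [CommRing R] (K : ModuleCat.{0} R) (n : ℕ)
    (h : ∀ i < n, Subsingleton (Abelian.Ext K (ModuleCat.of R R) i)) (m : ℕ) :
    ∀ (M : Type) [AddCommGroup M] [Module R M] (_ : M ≃ₗ[R] (Fin m → R)),
    ∀ i < n, Subsingleton (Abelian.Ext K (ModuleCat.of R M) i) := by
  induction m with
  | zero =>
    intro M _ _ e i _
    have : Subsingleton M := e.toEquiv.subsingleton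
    exact ext_subsingleton_of_subsingleton K M i
  | succ m ih =>
    intro M _ _ e
    let f : R →ₗ[R] M := e.symm.toLinearMap ∘ₗ LinearMap.single R (fun _ : Fin (m+1) => R) 0
    let g : M →ₗ[R] (Fin m → R) := LinearMap.funLeft R R Fin.succ ∘ₗ e.toLinearMap
    have hf : Function.Injective f := by
      intro a b hab
      have := e.symm.injective hab
      simpa using congrFun this 0
    have hg : Function.Surjective g := by
      intro v
      refine ⟨e.symm (Fin.cons 0 v), ?_⟩
      funext j
      simp [g, LinearMap.funLeft]
    have hfg : Function.Exact f g := by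
      intro x
      constructor
      · intro hx
        refine ⟨e x 0, ?_⟩
        apply e.injective
        funext j
        refine Fin.cases ?_ (fun j => ?_) j
        · simp [f]
        · have := congrFun hx j
          simp [g, LinearMap.funLeft] at this
          simp [f, this]
      · rintro ⟨r, rfl⟩
        funext j
        simp [f, g, LinearMap.funLeft]
    exact depth_mid K (ses_of f g hf hg hfg) n h (ih _ (LinearEquiv.refl _ _))

section Main
open IsLocalRing MvPowerSeries

variable {n : ℕ}

/-- Vanishing of `Ext^i(k, M)` for `i < m`. -/
def DepthGE (R : Type) [CommRing R] [IsLocalRing R] (M : Type) [AddCommGroup M] [Module R M]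
    (m : ℕ) : Prop :=
  ∀ i < m, Subsingleton (Abelian.Ext (ModuleCat.of R (ResidueField R)) (ModuleCat.of R M) i)

theorem depth_self : DepthGE (MvPowerSeries (Fin n) ℂ) (MvPowerSeries (Fin n) ℂ) n := by
  refine (rees_local n (MvPowerSeries (Fin n) ℂ)).2 ⟨List.ofFn X, by simp, ?_, X_regular⟩
  intro r hr
  rw [List.mem_ofFn] at hr
  obtain ⟨i, rfl⟩ := hr
  rw [← span_X_eq]
  exact Ideal.subset_span ⟨i, rfl⟩

theorem depth_free (M : Type) [AddCommGroup M] [Module (MvPowerSeries (Fin n) ℂ) M]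
    [Module.Finite (MvPowerSeries (Fin n) ℂ) M] [Module.Free (MvPowerSeries (Fin n) ℂ) M] :
    DepthGE (MvPowerSeries (Fin n) ℂ) M n :=
  ext_pi _ n depth_self _ M
    (Module.finBasis (MvPowerSeries (Fin n) ℂ) M).equivFun

theorem free_of_depthGE (M : Type) [AddCommGroup M] [Module (MvPowerSeries (Fin n) ℂ) M]
    [Module.Finite (MvPowerSeries (Fin n) ℂ) M] (h : DepthGE (MvPowerSeries (Fin n) ℂ) M n) :
    Module.Free (MvPowerSeries (Fin n) ℂ) M :=
  free_of_depth M X span_X_eq h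

/-- A free ideal in a domain is principal. -/
theorem principal_of_free {R : Type} [CommRing R] [IsDomain R] (J : Ideal R)
    [Module.Free R J] : ∃ g, J = Ideal.span {g} := by
  classical
  let b := Module.Free.chooseBasis R J
  have hsub : Subsingleton (Module.Free.ChooseBasisIndex R J) := by
    refine ⟨fun i j => ?_⟩
    by_contra hij
    have hli := b.linearIndependent
    have hrel : (b j : R) • b i - (b i : R) • b j = 0 := by
      ext
      simp [mul_comm]
    have h1 := congrArg (fun z => b.repr z i) hrel
    simp [hij] at h1
    exact b.ne_zero j h1
  rcases isEmpty_or_nonempty (Module.Free.ChooseBasisIndex R J) with he | ⟨⟨i⟩⟩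
  · refine ⟨0, ?_⟩
    have : Subsingleton J := b.repr.toEquiv.subsingleton
    rw [Ideal.span_singleton_zero]
    exact (Submodule.subsingleton_iff_eq_bot).1 this
  · refine ⟨b i, ?_⟩
    apply le_antisymm
    · intro x hx
      rw [Ideal.mem_span_singleton']
      refine ⟨b.repr ⟨x, hx⟩ i, ?_⟩
      have : b.repr ⟨x, hx⟩ i • b i = ⟨x, hx⟩ := by
        apply b.repr.injective
        ext j
        rw [Subsingleton.elim j i]
        simp
      exact congrArg Subtype.val this
    · rw [Ideal.span_le, Set.singleton_subset_iff]
      exact (b i).2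

/-- `(θ, a) ↦ θ f + a f`. -/
noncomputable def jacMap (f : MvPowerSeries (Fin n) ℂ) :
    (Derivation ℂ (MvPowerSeries (Fin n) ℂ) (MvPowerSeries (Fin n) ℂ) × MvPowerSeries (Fin n) ℂ)
      →ₗ[MvPowerSeries (Fin n) ℂ] MvPowerSeries (Fin n) ℂ :=
  (derEval f).coprod (LinearMap.toSpanSingleton _ _ f)

theorem jacMap_apply (f : MvPowerSeries (Fin n) ℂ)
    (θ : Derivation ℂ (MvPowerSeries (Fin n) ℂ) (MvPowerSeries (Fin n) ℂ))
    (a : MvPowerSeries (Fin n) ℂ) : jacMap f (θ, a) = θ f + a * f := by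
  simp [jacMap, derEval]

theorem jacMap_range (f : MvPowerSeries (Fin n) ℂ) :
    LinearMap.range (jacMap f) = Ideal.span ({f} ∪ { g : MvPowerSeries (Fin n) ℂ |
      ∃ θ : Derivation ℂ (MvPowerSeries (Fin n) ℂ) (MvPowerSeries (Fin n) ℂ), θ f = g }) := by
  apply le_antisymm
  · rintro _ ⟨⟨θ, a⟩, rfl⟩
    rw [jacMap_apply]
    exact add_mem (Ideal.subset_span (Or.inr ⟨θ, rfl⟩))
      (Ideal.mul_mem_left _ _ (Ideal.subset_span (Or.inl rfl)))
  · rw [Ideal.span_le]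
    rintro g (hg | ⟨θ, rfl⟩)
    · rw [Set.mem_singleton_iff] at hg
      subst hg
      exact ⟨(0, 1), by rw [jacMap_apply]; simp⟩
    · exact ⟨(θ, 0), by rw [jacMap_apply]; simp⟩

theorem mem_of_ker (f : MvPowerSeries (Fin n) ℂ)
    (θ : Derivation ℂ (MvPowerSeries (Fin n) ℂ) (MvPowerSeries (Fin n) ℂ))
    (a : MvPowerSeries (Fin n) ℂ) (h : (θ, a) ∈ LinearMap.ker (jacMap f)) : θ ∈ logDer f := by
  rw [LinearMap.mem_ker, jacMap_apply] at h
  have h2 : θ f ∈ Ideal.span {f} := by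
    rw [Ideal.mem_span_singleton']
    refine ⟨-a, ?_⟩
    rw [neg_mul]
    exact (eq_neg_of_add_eq_zero_left h).symm
  exact h2

/-- The kernel of `jacMap` is the module of logarithmic derivations. -/
noncomputable def kerEquiv (f : MvPowerSeries (Fin n) ℂ) (hf : f ≠ 0) :
    LinearMap.ker (jacMap f) ≃ₗ[MvPowerSeries (Fin n) ℂ] logDer f :=
  LinearEquiv.ofBijective
    { toFun := fun x => ⟨x.1.1, mem_of_ker f x.1.1 x.1.2 x.2⟩
      map_add' := fun _ _ => rfl
      map_smul' := fun _ _ => rfl } (by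
    constructor
    · rintro ⟨⟨θ, a⟩, h⟩ ⟨⟨θ', a'⟩, h'⟩ h0
      have hθ : θ = θ' := congrArg Subtype.val h0
      subst hθ
      have h1 := h
      have h1' := h'
      rw [LinearMap.mem_ker, jacMap_apply] at h1 h1'
      have h2 : a * f = a' * f := add_left_cancel (h1.trans h1'.symm)
      have h3 : a = a' := mul_right_cancel₀ hf h2
      subst h3
      rfl
    · rintro ⟨θ, hθ⟩
      have hθ' : θ f ∈ Ideal.span {f} := hθ
      rw [Ideal.mem_span_singleton'] at hθ'
      obtain ⟨a, ha⟩ := hθ'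
      refine ⟨⟨(θ, -a), ?_⟩, rfl⟩
      rw [LinearMap.mem_ker, jacMap_apply, ← ha]
      ring)

end Main

theorem logDer_free_iff_jacobian_CM_codim_two (n : ℕ) (hn : 2 ≤ n)
    (f : MvPowerSeries (Fin n) ℂ) (hf0 : f ≠ 0) (hfu : ¬ IsUnit f)
    (hsq : Squarefree f)
    (J : Ideal (MvPowerSeries (Fin n) ℂ))
    (hJ : J = Ideal.span ({f} ∪ { g : MvPowerSeries (Fin n) ℂ |
      ∃ θ : Derivation ℂ (MvPowerSeries (Fin n) ℂ) (MvPowerSeries (Fin n) ℂ), θ f = g }))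
    (hsing : Nontrivial (MvPowerSeries (Fin n) ℂ ⧸ J)) :
    Module.Free (MvPowerSeries (Fin n) ℂ) (↥(logDer f)) ↔
      moduleDepth (MvPowerSeries (Fin n) ℂ) (MvPowerSeries (Fin n) ℂ ⧸ J) = n - 2 := by
  classical
  have hJr : J = LinearMap.range (jacMap f) := by rw [hJ, jacMap_range]
  have hDfin : Module.Finite (MvPowerSeries (Fin n) ℂ)
      (Derivation ℂ (MvPowerSeries (Fin n) ℂ) (MvPowerSeries (Fin n) ℂ)) :=
    Module.Finite.equiv derEquiv.symm
  have hDfree : Module.Free (MvPowerSeries (Fin n) ℂ)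
      (Derivation ℂ (MvPowerSeries (Fin n) ℂ) (MvPowerSeries (Fin n) ℂ)) :=
    Module.Free.of_equiv derEquiv.symm
  have hB := depth_free (n := n)
    (Derivation ℂ (MvPowerSeries (Fin n) ℂ) (MvPowerSeries (Fin n) ℂ) × MvPowerSeries (Fin n) ℂ)
  have hR := depth_self (n := n)
  -- the two short exact sequences
  have hjm : ∀ x, jacMap f x ∈ J := fun x => by rw [hJr]; exact ⟨x, rfl⟩
  have hinj : Function.Injective (LinearMap.ker (jacMap f)).subtype :=
    Submodule.injective_subtype _
  have hsurj : Function.Surjective (LinearMap.codRestrict J (jacMap f) hjm) := by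
    rintro ⟨y, hy⟩
    have hy' := hy
    rw [hJr] at hy'
    obtain ⟨x, hx⟩ := hy'
    exact ⟨x, Subtype.ext hx⟩
  have hex : Function.Exact (LinearMap.ker (jacMap f)).subtype
      (LinearMap.codRestrict J (jacMap f) hjm) := by
    intro x
    constructor
    · intro hx
      exact ⟨⟨x, congrArg Subtype.val hx⟩, rfl⟩
    · rintro ⟨⟨x, hx⟩, rfl⟩
      exact Subtype.ext hx
  have S1 := ses_of (R := MvPowerSeries (Fin n) ℂ) (A := LinearMap.ker (jacMap f))
    (B := Derivation ℂ (MvPowerSeries (Fin n) ℂ) (MvPowerSeries (Fin n) ℂ) ×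
      MvPowerSeries (Fin n) ℂ) (C := J) (LinearMap.ker (jacMap f)).subtype
    (LinearMap.codRestrict J (jacMap f) hjm) hinj hsurj hex
  have hex2 : Function.Exact (Submodule.subtype J) (Submodule.mkQ J) := by
    intro x
    simpa using Ideal.Quotient.eq_zero_iff_mem
  have S2 := ses_of _ _ (Submodule.injective_subtype J) (Submodule.mkQ_surjective J) hex2
  have hLfree : Module.Free (MvPowerSeries (Fin n) ℂ) (logDer f) ↔
      DepthGE (MvPowerSeries (Fin n) ℂ) (LinearMap.ker (jacMap f)) n := by
    constructor
    · intro h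
      have := Module.Free.of_equiv (kerEquiv f hf0).symm
      exact depth_free _
    · intro h
      have := free_of_depthGE _ h
      exact Module.Free.of_equiv (kerEquiv f hf0)
  obtain ⟨m, rfl⟩ : ∃ m, n = m + 2 := ⟨n - 2, by omega⟩
  rw [hLfree, Nat.add_sub_cancel]
  unfold moduleDepth
  simp only [ext_cmp]
  constructor
  · intro hL
    have hJd := depth_right _ S1 (m + 1) (fun i hi => hB i (by omega)) hL
    have hQ := depth_right _ S2 m (fun i hi => hR i (by omega)) hJd
    have hne : ¬ Subsingleton (Abelian.Ext
        (ModuleCat.of (MvPowerSeries (Fin (m + 2)) ℂ)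
          (IsLocalRing.ResidueField (MvPowerSeries (Fin (m + 2)) ℂ)))
        (ModuleCat.of (MvPowerSeries (Fin (m + 2)) ℂ)
          (MvPowerSeries (Fin (m + 2)) ℂ ⧸ J)) m) := by
      intro hsub
      -- otherwise `J` is free, hence principal
      have hJd' := depth_left _ S2 (m + 1) hR (fun i hi => by
        rcases Nat.lt_succ_iff_lt_or_eq.1 hi with h | rfl
        · exact hQ i h
        · exact hsub)
      have hJfree : Module.Free (MvPowerSeries (Fin (m + 2)) ℂ) J := free_of_depthGE J hJd'
      have hdom : IsDomain (MvPowerSeries (Fin (m + 2)) ℂ) := NoZeroDivisors.to_isDomain _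
      obtain ⟨g, hg⟩ := principal_of_free J
      have hgJ : g ∈ J := by rw [hg]; exact Ideal.mem_span_singleton_self g
      refine jac_not_principal f hf0 hfu hsq g ?_ ?_ ?_ ?_
      · intro hu
        rw [Ideal.Quotient.nontrivial_iff] at hsing
        exact hsing (by rw [hg]; exact Ideal.span_singleton_eq_top.2 hu)
      · rw [← Ideal.mem_span_singleton, ← hg, hJ]
        exact Ideal.subset_span (Or.inl rfl)
      · intro i
        rw [← Ideal.mem_span_singleton, ← hg, hJ]
        exact Ideal.subset_span (Or.inr ⟨_, rfl⟩)
      · rw [hJr] at hgJ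
        obtain ⟨⟨θ, a⟩, h⟩ := hgJ
        rw [jacMap_apply] at h
        refine ⟨a, fun i => θ (MvPowerSeries.X i), ?_⟩
        have hθ : θ f = ∑ i, θ (MvPowerSeries.X i) * MvPowerSeries.pderiv ℂ i f := by
          have h3 := congrArg (fun D => derEval f D) (der_eq θ)
          simp only [map_sum] at h3
          exact h3
        rw [← h, hθ]
        exact add_comm (∑ i, θ (MvPowerSeries.X i) * MvPowerSeries.pderiv ℂ i f) (a * f)
    refine le_antisymm (Nat.sInf_le hne) (le_csInf ⟨m, hne⟩ fun i hi => ?_)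
    by_contra h
    push Not at h
    exact hi (hQ i h)
  · intro hd
    have hQ : ∀ i < m, Subsingleton (Abelian.Ext
        (ModuleCat.of (MvPowerSeries (Fin (m + 2)) ℂ)
          (IsLocalRing.ResidueField (MvPowerSeries (Fin (m + 2)) ℂ)))
        (ModuleCat.of (MvPowerSeries (Fin (m + 2)) ℂ) (MvPowerSeries (Fin (m + 2)) ℂ ⧸ J)) i) := by
      intro i hi
      by_contra hns
      rw [← hd] at hi
      exact Nat.notMem_of_lt_sInf hi hns
    have hJd := depth_left _ S2 m (fun i hi => hR i (by omega)) hQ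
    exact depth_left _ S1 (m + 1) hB hJd
end
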